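/- arXiv:1309.7833 — 4 statements merged into one kernel-verified Lean document; each statement's English description precedes it below -/
import Mathlib

section
/- Fix σ > 0 and T > 0, and for t ∈ [0,T) and s > 0 define C(t,s) := ∫_ℝ f(s·e^{−½σ²(T−t)+x}) dγ_{σ²(T−t)}(x), where γ_v is the Gaussian measure on ℝ with mean 0 and variance v. Then C(t,s) = ∫_ℝ s^{z_y} e^{½σ²z_y(z_y−1)(T−t)} p(z_y) dy; moreover, for each t ∈ [0,T) the map s ↦ C(t,s) is infinitely differentiable on (0,∞), and for every n ≥ 1 one has sⁿ·(∂ⁿ/∂sⁿ)C(t,s) = ∫_ℝ (∏_{k=0}^{n−1}(z_y−k))·s^{z_y}·e^{½σ²z_y(z_y−1)(T−t)}·p(z_y) dy. -/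
open MeasureTheory ProbabilityTheory Complex Set

noncomputable def cpowR (s : ℝ) (z : ℂ) : ℂ := Complex.exp (z * Real.log s)

noncomputable def zLine (R y : ℝ) : ℂ := (R : ℂ) + (y : ℂ) * Complex.I

/-- Fourier transform `l̂(y) = ∫ l(x) e^{-ixy} dx`. -/
noncomputable def lhat (l : ℝ → ℝ) (y : ℝ) : ℂ :=
  ∫ x : ℝ, (l x : ℂ) * Complex.exp (-(Complex.I * (x : ℂ) * (y : ℂ)))

noncomputable def pCoef (l : ℝ → ℝ) (y : ℝ) : ℂ := lhat l y / (2 * (Real.pi : ℂ))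

/-- Black-Scholes cash greek `D_n(t,s)` in integral form (with `C = D_0`). -/
noncomputable def cashGreek (σ2 T R : ℝ) (l : ℝ → ℝ) (n : ℕ) (t s : ℝ) : ℂ :=
  ∫ y : ℝ, (∏ k ∈ Finset.range n, (zLine R y - (k : ℂ))) * cpowR s (zLine R y) *
    Complex.exp (((σ2 : ℂ) / 2) * zLine R y * (zLine R y - 1) * ((T : ℂ) - (t : ℂ))) * pCoef l y

/-- Black-Scholes price `C(t,s)` as a Gaussian expectation. -/
noncomputable def BSprice (σ T : ℝ) (f : ℝ → ℝ) (t s : ℝ) : ℝ :=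
  ∫ x : ℝ, f (s * Real.exp (-(σ ^ 2 / 2) * (T - t) + x))
    ∂(gaussianReal 0 (Real.toNNReal (σ ^ 2 * (T - t))))

/-!
Under the pricing measure the log-price at maturity is Gaussian with mean `μ = log s - v / 2` and
variance `v = σ² (T - t)`, and its moment generating function is
`z ↦ s ^ z * exp (v z (z - 1) / 2)`. So the price is `∫ l(x) e^{Rx} φ(x) dx` with `φ` the density
of `N(μ, v)`. On the line `Re z = R` the Bromwich formula writes `2π e^{Rx} φ(x)` as the Fourier
transform of the moment generating function, and self-adjointness of the Fourier transform moves
that transform onto `l`. The resulting integral depends on `s` only through `s ^ z`, and the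
Gaussian decay in `Im z` allows differentiating under the integral sign as often as one likes.
-/

open scoped NNReal Polynomial ContDiff

section SuccessiveDerivatives

variable {𝕜 E F : Type*} [NontriviallyNormedField 𝕜] [NormedAddCommGroup E] [NormedSpace 𝕜 E]
  [NormedAddCommGroup F] [NormedSpace 𝕜 F] {U : Set 𝕜}

lemma eqOn_iteratedDerivWithin_of_hasDerivWithinAt_succ {G : ℕ → 𝕜 → E}
    (hU : UniqueDiffOn 𝕜 U)
    (hG : ∀ n, ∀ x ∈ U, HasDerivWithinAt (G n) (G (n + 1) x) U x) (n : ℕ) :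
    EqOn (iteratedDerivWithin n (G 0) U) (G n) U := by
  induction n with
  | zero => intro x _; simp
  | succ n ih =>
    intro x hx
    rw [iteratedDerivWithin_succ, derivWithin_congr ih (ih hx), (hG n x hx).derivWithin (hU x hx)]

lemma contDiffOn_infty_of_hasDerivWithinAt_succ {G : ℕ → 𝕜 → E} (hU : UniqueDiffOn 𝕜 U)
    (hG : ∀ n, ∀ x ∈ U, HasDerivWithinAt (G n) (G (n + 1) x) U x) :
    ContDiffOn 𝕜 ∞ (G 0) U :=
  contDiffOn_of_differentiableOn_deriv fun n _ ↦
    DifferentiableOn.congr (fun x hx ↦ (hG n x hx).differentiableWithinAt)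
      (eqOn_iteratedDerivWithin_of_hasDerivWithinAt_succ hU hG n)

lemma iteratedDerivWithin_continuousLinearMap_comp (L : E →L[𝕜] F) {f : 𝕜 → E} {n : ℕ} {x : 𝕜}
    (hf : ContDiffWithinAt 𝕜 n f U x) (hU : UniqueDiffOn 𝕜 U) (hx : x ∈ U) :
    iteratedDerivWithin n (L ∘ f) U x = L (iteratedDerivWithin n f U x) := by
  simp only [iteratedDerivWithin, L.iteratedFDerivWithin_comp_left hf hU hx le_rfl,
    ContinuousLinearMap.compContinuousMultilinearMap_coe, Function.comp_apply]

end SuccessiveDerivatives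

section FourierTransform

variable {l : ℝ → ℝ}

lemma lhat_eq_fourierIntegral (l : ℝ → ℝ) :
    lhat l = VectorFourier.fourierIntegral Real.probChar volume (LinearMap.mul ℝ ℝ)
      (fun x ↦ (l x : ℂ)) := by
  ext y
  rw [VectorFourier.fourierIntegral_probChar, lhat]
  congr with x
  rw [smul_eq_mul, mul_comm, LinearMap.mul_apply']
  push_cast
  ring_nf

lemma norm_lhat_le (l : ℝ → ℝ) (y : ℝ) : ‖lhat l y‖ ≤ ∫ x, ‖l x‖ := by
  simpa [lhat_eq_fourierIntegral] using
    VectorFourier.norm_fourierIntegral_le_integral_norm Real.probChar volume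
      (LinearMap.mul ℝ ℝ) (fun x ↦ (l x : ℂ)) y

lemma continuous_lhat (hl : Integrable l) : Continuous (lhat l) := by
  rw [lhat_eq_fourierIntegral]
  exact VectorFourier.fourierIntegral_continuous Real.continuous_probChar
    continuous_mul hl.ofReal

lemma integral_lhat_mul {g : ℝ → ℂ} (hl : Integrable l) (hg : Integrable g) :
    ∫ y, lhat l y * g y = ∫ x, l x * ∫ y : ℝ, cexp (-(y * x) * I) * g y := by
  rw [lhat_eq_fourierIntegral]
  refine (VectorFourier.integral_fourierIntegral_smul_eq_flip (L := LinearMap.mul ℝ ℝ)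
    Real.continuous_probChar continuous_mul hl.ofReal hg).trans ?_
  simp [VectorFourier.fourierIntegral_probChar, mul_comm]

end FourierTransform

section PowerIntegral

lemma cpowR_eq_cpow {s : ℝ} (hs : 0 < s) (z : ℂ) : cpowR s z = (s : ℂ) ^ z := by
  rw [cpowR, cpow_def_of_ne_zero (ofReal_ne_zero.mpr hs.ne'), ofReal_log hs.le, mul_comm]

lemma zLine_sub (R a y : ℝ) : zLine (R - a) y = zLine R y - a := by
  simp only [zLine]
  push_cast
  ring

lemma norm_cpowR_zLine {s : ℝ} (hs : 0 < s) (R y : ℝ) : ‖cpowR s (zLine R y)‖ = s ^ R := by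
  rw [cpowR_eq_cpow hs, norm_cpow_eq_rpow_re_of_pos hs]
  simp [zLine]

lemma cpowR_eq_pow_mul_cpowR_sub {s : ℝ} (hs : 0 < s) (z : ℂ) (n : ℕ) :
    cpowR s z = s ^ n * cpowR s (z - n) := by
  have hs' : (s : ℂ) ≠ 0 := ofReal_ne_zero.mpr hs.ne'
  rw [cpowR_eq_cpow hs, cpowR_eq_cpow hs, cpow_sub _ _ hs', cpow_natCast]
  field_simp

lemma hasDerivAt_cpowR {s : ℝ} (hs : 0 < s) (z : ℂ) :
    HasDerivAt (fun s ↦ cpowR s z) (z * cpowR s (z - 1)) s := by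
  have h : HasDerivAt (fun s : ℝ ↦ (s : ℂ) ^ z) (z * (s : ℂ) ^ (z - 1)) s := by
    simpa using ((hasDerivAt_id (s : ℂ)).cpow_const (c := z) (.inl (by simpa))).comp_ofReal
  rw [cpowR_eq_cpow hs]
  refine h.congr_of_eventuallyEq ?_
  filter_upwards [Ioi_mem_nhds hs] with x hx using cpowR_eq_cpow hx z

/-- The integral `∫ s ^ z g(y) dy` along the vertical line `z = R + i y`. Up to the factor `2π`
this is an inverse Mellin transform, with the sign of the exponent opposite to `mellinInv`. -/
noncomputable def powerIntegral (R : ℝ) (g : ℝ → ℂ) (s : ℝ) : ℂ :=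
  ∫ y, cpowR s (zLine R y) * g y

variable {R s : ℝ} {g : ℝ → ℂ}

lemma integrable_cpowR_zLine_mul (hg : Integrable g) (hs : 0 < s) :
    Integrable fun y ↦ cpowR s (zLine R y) * g y := by
  refine hg.bdd_mul (c := s ^ R) ?_ (ae_of_all _ fun y ↦ (norm_cpowR_zLine hs R y).le)
  unfold cpowR zLine
  exact Continuous.aestronglyMeasurable (by fun_prop)

lemma hasDerivAt_powerIntegral (hg : Integrable g) (hg' : Integrable fun y ↦ zLine R y * g y)
    (hs : 0 < s) :
    HasDerivAt (powerIntegral R g) (powerIntegral (R - 1) (fun y ↦ zLine R y * g y) s) s := by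
  have hnhds : {x : ℝ | 0 < x ∧ x ^ (R - 1) < s ^ (R - 1) + 1} ∈ nhds s :=
    (eventually_gt_nhds hs).and <|
      (Real.continuousAt_rpow_const s (R - 1) (.inl hs.ne')).eventually_lt_const (lt_add_one _)
  refine (hasDerivAt_integral_of_dominated_loc_of_deriv_le hnhds
    (F' := fun x y ↦ cpowR x (zLine (R - 1) y) * (zLine R y * g y))
    (bound := fun y ↦ (s ^ (R - 1) + 1) * ‖zLine R y * g y‖) ?_
    (integrable_cpowR_zLine_mul hg hs) (integrable_cpowR_zLine_mul hg' hs).aestronglyMeasurable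
    (ae_of_all _ fun y x hx ↦ ?_) (hg'.norm.const_mul _) (ae_of_all _ fun y x hx ↦ ?_)).2
  · filter_upwards [Ioi_mem_nhds hs] with x hx
      using (integrable_cpowR_zLine_mul hg hx).aestronglyMeasurable
  · rw [norm_mul, norm_cpowR_zLine hx.1]
    exact mul_le_mul_of_nonneg_right hx.2.le (norm_nonneg _)
  · have hz : zLine (R - 1) y = zLine R y - 1 := by simpa using zLine_sub R 1 y
    refine ((hasDerivAt_cpowR hx.1 (zLine R y)).mul_const (g y)).congr_deriv ?_
    rw [hz]
    ring

lemma integrable_polynomial_eval_mul (hg : ∀ n : ℕ, Integrable fun y : ℝ ↦ (y : ℂ) ^ n * g y)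
    (q : ℂ[X]) : Integrable fun y : ℝ ↦ q.eval (y : ℂ) * g y := by
  induction q using Polynomial.induction_on' with
  | add p q hp hq =>
    simp only [Polynomial.eval_add, add_mul]
    exact hp.add hq
  | monomial n a => simpa only [Polynomial.eval_monomial, mul_assoc] using (hg n).const_mul a

lemma integrable_prod_zLine_sub_mul (hg : ∀ n : ℕ, Integrable fun y : ℝ ↦ (y : ℂ) ^ n * g y)
    (R : ℝ) (n : ℕ) :
    Integrable fun y ↦ (∏ k ∈ Finset.range n, (zLine R y - k)) * g y := by
  have h := integrable_polynomial_eval_mul hg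
    ((descPochhammer ℂ n).comp (.C (R : ℂ) + .X * .C I))
  simpa [descPochhammer_eval_eq_prod_range, zLine, mul_comm I] using h

lemma hasDerivAt_powerIntegral_prod (hg : ∀ n : ℕ, Integrable fun y : ℝ ↦ (y : ℂ) ^ n * g y)
    (R : ℝ) (n : ℕ) (hs : 0 < s) :
    HasDerivAt (powerIntegral (R - n) fun y ↦ (∏ k ∈ Finset.range n, (zLine R y - k)) * g y)
      (powerIntegral (R - (n + 1 : ℕ))
        (fun y ↦ (∏ k ∈ Finset.range (n + 1), (zLine R y - k)) * g y) s) s := by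
  have hprod : (fun y ↦ (∏ k ∈ Finset.range (n + 1), (zLine R y - k)) * g y) =
      fun y ↦ zLine (R - n) y * ((∏ k ∈ Finset.range n, (zLine R y - k)) * g y) := by
    ext y
    rw [Finset.prod_range_succ, zLine_sub, ofReal_natCast]
    ring
  have hsucc := integrable_prod_zLine_sub_mul hg R (n + 1)
  rw [hprod] at hsucc ⊢
  rw [Nat.cast_succ, ← sub_sub]
  exact hasDerivAt_powerIntegral (integrable_prod_zLine_sub_mul hg R n) hsucc hs

lemma contDiffOn_powerIntegral (hg : ∀ n : ℕ, Integrable fun y : ℝ ↦ (y : ℂ) ^ n * g y) (R : ℝ) :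
    ContDiffOn ℝ ∞ (powerIntegral R g) (Ioi 0) := by
  simpa using contDiffOn_infty_of_hasDerivWithinAt_succ (uniqueDiffOn_Ioi 0)
    fun n s hs ↦ (hasDerivAt_powerIntegral_prod hg R n hs).hasDerivWithinAt

lemma iteratedDerivWithin_powerIntegral
    (hg : ∀ n : ℕ, Integrable fun y : ℝ ↦ (y : ℂ) ^ n * g y) (R : ℝ) (n : ℕ) (hs : 0 < s) :
    iteratedDerivWithin n (powerIntegral R g) (Ioi 0) s =
      powerIntegral (R - n) (fun y ↦ (∏ k ∈ Finset.range n, (zLine R y - k)) * g y) s := by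
  simpa using eqOn_iteratedDerivWithin_of_hasDerivWithinAt_succ (uniqueDiffOn_Ioi 0)
    (fun n s hs ↦ (hasDerivAt_powerIntegral_prod hg R n hs).hasDerivWithinAt) n hs

end PowerIntegral

section GaussianMGF

variable {v : ℝ≥0}

lemma norm_complexMGF_gaussianReal_zLine (μ : ℝ) (v : ℝ≥0) (R y : ℝ) :
    ‖complexMGF id (gaussianReal μ v) (zLine R y)‖ =
      Real.exp (R * μ + v * R ^ 2 / 2) * Real.exp (-(v / 2) * y ^ 2) := by
  rw [complexMGF_id_gaussianReal, norm_exp, ← Real.exp_add]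
  congr 1
  simp only [zLine, pow_two, add_re, mul_re, ofReal_re, I_re, mul_zero, ofReal_im, I_im, mul_one,
    sub_self, add_zero, add_im, mul_im, zero_add, sub_zero, div_ofNat_re, zero_mul, neg_mul]
  ring

lemma continuous_complexMGF_gaussianReal_zLine (μ : ℝ) (v : ℝ≥0) (R : ℝ) :
    Continuous fun y ↦ complexMGF id (gaussianReal μ v) (zLine R y) := by
  simp only [complexMGF_id_gaussianReal, zLine]
  fun_prop

lemma integrable_pow_mul_complexMGF_gaussianReal_zLine (hv : v ≠ 0) (μ R : ℝ) (n : ℕ) :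
    Integrable fun y : ℝ ↦ (y : ℂ) ^ n * complexMGF id (gaussianReal μ v) (zLine R y) := by
  have hpow : Integrable fun y : ℝ ↦ y ^ n * Real.exp (-(v / 2) * y ^ 2) := by
    simpa using integrable_rpow_mul_exp_neg_mul_sq (b := v / 2) (s := n) (by positivity)
      (by linarith [n.cast_nonneg (α := ℝ)])
  refine (hpow.norm.const_mul (Real.exp (R * μ + v * R ^ 2 / 2))).mono'
    (Continuous.aestronglyMeasurable <|
      (by fun_prop : Continuous fun y : ℝ ↦ (y : ℂ) ^ n).mul
        (continuous_complexMGF_gaussianReal_zLine μ v R))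
    (ae_of_all _ fun y ↦ le_of_eq ?_)
  simp only [norm_mul, norm_pow, norm_real, norm_complexMGF_gaussianReal_zLine, Real.norm_eq_abs,
    Real.abs_exp]
  ring

lemma integral_cexp_neg_mul_complexMGF_gaussianReal (hv : v ≠ 0) (μ R x : ℝ) :
    ∫ y, cexp (-(zLine R y * x)) * complexMGF id (gaussianReal μ v) (zLine R y) =
      2 * Real.pi * gaussianPDFReal μ v x := by
  have hv' : (v : ℂ) ≠ 0 := by exact_mod_cast hv
  -- Completing the square leaves a Gaussian integral over a horizontal line in the `y`-plane.
  have hsquare (y : ℝ) : cexp (-(zLine R y * x)) * complexMGF id (gaussianReal μ v) (zLine R y) =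
      cexp (-(v / 2 : ℝ) * (y + (-(R + (μ - x) / v) : ℝ) * I) ^ 2) *
        (Real.exp (-(x - μ) ^ 2 / (2 * v)) : ℝ) := by
    rw [complexMGF_id_gaussianReal, ofReal_exp, ← Complex.exp_add, ← Complex.exp_add, zLine]
    congr 1
    push_cast
    field_simp
    linear_combination (v ^ 2 * y ^ 2 + (v * R + μ - x) ^ 2) * I_sq
  have hsqrt : ((Real.pi : ℂ) / (v / 2 : ℝ)) ^ (1 / 2 : ℂ) =
      (2 * Real.pi * (√(2 * Real.pi * v))⁻¹ : ℝ) := by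
    have hroot : √(Real.pi / (v / 2)) = 2 * Real.pi * (√(2 * Real.pi * v))⁻¹ := by
      rw [show Real.pi / (v / 2) = (2 * Real.pi) ^ 2 / (2 * Real.pi * v) by field_simp,
        Real.sqrt_div (by positivity), Real.sqrt_sq (by positivity), div_eq_mul_inv]
    rw [← hroot, Real.sqrt_eq_rpow, ofReal_cpow (by positivity)]
    push_cast
    rfl
  simp_rw [hsquare]
  rw [integral_mul_const, GaussianFourier.integral_cexp_neg_mul_sq_add_real_mul_I
    (by simpa [pos_iff_ne_zero] using hv), hsqrt, gaussianPDFReal]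
  push_cast
  ring

lemma integral_complexMGF_gaussianReal_mul_pCoef {l : ℝ → ℝ} (hl : Integrable l) (hv : v ≠ 0)
    (μ R : ℝ) :
    ∫ y, complexMGF id (gaussianReal μ v) (zLine R y) * pCoef l y =
      ((∫ x, Real.exp (R * x) * l x ∂gaussianReal μ v : ℝ) : ℂ) := by
  have hmgf : Integrable fun y ↦ complexMGF id (gaussianReal μ v) (zLine R y) := by
    simpa using integrable_pow_mul_complexMGF_gaussianReal_zLine hv μ R 0
  have hbromwich (x : ℝ) :
      ∫ y : ℝ, cexp (-(y * x) * I) * complexMGF id (gaussianReal μ v) (zLine R y) =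
        cexp (R * x) * (2 * Real.pi * gaussianPDFReal μ v x) := by
    rw [← integral_cexp_neg_mul_complexMGF_gaussianReal hv μ R x, ← integral_const_mul]
    congr with y
    rw [← mul_assoc, ← Complex.exp_add, zLine]
    ring_nf
  calc ∫ y, complexMGF id (gaussianReal μ v) (zLine R y) * pCoef l y
      = (2 * Real.pi : ℂ)⁻¹ * ∫ y, lhat l y * complexMGF id (gaussianReal μ v) (zLine R y) := by
        rw [← integral_const_mul]
        congr with y
        rw [pCoef]
        ring
    _ = ∫ x, ((gaussianPDFReal μ v x * (Real.exp (R * x) * l x) : ℝ) : ℂ) := by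
        rw [integral_lhat_mul hl hmgf, ← integral_const_mul]
        congr with x
        rw [hbromwich]
        push_cast
        field_simp
    _ = ((∫ x, Real.exp (R * x) * l x ∂gaussianReal μ v : ℝ) : ℂ) := by
        rw [integral_complex_ofReal, integral_gaussianReal_eq_integral_smul hv]
        simp only [smul_eq_mul]

end GaussianMGF

section BlackScholes

/-- The part of the integrand of the price with total variance `v` that does not depend on the spot:
the moment generating function of the log-return `N(-v / 2, v)` at `z = R + i y`, which equals
`exp (v z (z - 1) / 2)`, times the Fourier coefficient `p(z)` of the payoff. -/
noncomputable def priceWeight (v : ℝ≥0) (R : ℝ) (l : ℝ → ℝ) (y : ℝ) : ℂ :=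
  complexMGF id (gaussianReal (-(v / 2)) v) (zLine R y) * pCoef l y

variable {R s : ℝ} {l : ℝ → ℝ} {v : ℝ≥0}

lemma integrable_pow_mul_priceWeight (hl : Integrable l) (hv : v ≠ 0) (R : ℝ) (n : ℕ) :
    Integrable fun y : ℝ ↦ (y : ℂ) ^ n * priceWeight v R l y := by
  simp only [priceWeight, ← mul_assoc]
  refine (integrable_pow_mul_complexMGF_gaussianReal_zLine hv _ R n).mul_bdd
    (c := (∫ x, ‖l x‖) / (2 * Real.pi)) ?_ (ae_of_all _ fun y ↦ ?_)
  · exact ((continuous_lhat hl).div_const _).aestronglyMeasurable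
  · have h2pi : ‖(2 * Real.pi : ℂ)‖ = 2 * Real.pi := by simp [abs_of_pos Real.pi_pos]
    rw [pCoef, norm_div, h2pi]
    gcongr
    exact norm_lhat_le l y

lemma powerIntegral_priceWeight (v : ℝ≥0) (R : ℝ) (l : ℝ → ℝ) (s : ℝ) :
    powerIntegral R (priceWeight v R l) s =
      ∫ y, complexMGF id (gaussianReal (Real.log s - v / 2) v) (zLine R y) * pCoef l y := by
  rw [powerIntegral]
  congr with y
  rw [priceWeight, cpowR, complexMGF_id_gaussianReal, complexMGF_id_gaussianReal, ← mul_assoc,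
    ← Complex.exp_add]
  push_cast
  ring_nf

lemma BSprice_eq_integral_gaussianReal_log {σ T t : ℝ} (f : ℝ → ℝ) (hv : v = σ ^ 2 * (T - t))
    (hs : 0 < s) :
    BSprice σ T f t s = ∫ x, f (Real.exp x) ∂gaussianReal (Real.log s - v / 2) v := by
  have hlog (x : ℝ) : s * Real.exp (-(σ ^ 2 / 2) * (T - t) + x) =
      Real.exp (Real.log s - v / 2 + x) := by
    rw [hv, ← Real.exp_log hs, ← Real.exp_add, Real.log_exp]
    ring_nf
  simp only [BSprice, hlog, ← hv, Real.toNNReal_coe]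
  rw [← (measurableEmbedding_addLeft _).integral_map (fun x ↦ f (Real.exp x)),
    gaussianReal_map_const_add, zero_add]

lemma BSprice_eq_powerIntegral {σ T t : ℝ} {f : ℝ → ℝ}
    (hl : l = fun x ↦ f (Real.exp x) * Real.exp (-R * x)) (hlint : Integrable l)
    (hv : v = σ ^ 2 * (T - t)) (hv0 : v ≠ 0) (hs : 0 < s) :
    (BSprice σ T f t s : ℂ) = powerIntegral R (priceWeight v R l) s := by
  have hpayoff (x : ℝ) : f (Real.exp x) = Real.exp (R * x) * l x := by
    rw [hl, mul_left_comm, ← Real.exp_add]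
    simp
  rw [BSprice_eq_integral_gaussianReal_log f hv hs, powerIntegral_priceWeight,
    integral_complexMGF_gaussianReal_mul_pCoef hlint hv0]
  simp only [hpayoff]

lemma cashGreek_eq_pow_mul_powerIntegral {σ2 T t : ℝ} (l : ℝ → ℝ) (hv : v = σ2 * (T - t))
    (hs : 0 < s) (n : ℕ) :
    cashGreek σ2 T R l n t s = s ^ n * powerIntegral (R - n)
      (fun y ↦ (∏ k ∈ Finset.range n, (zLine R y - k)) * priceWeight v R l y) s := by
  have hmgf (y : ℝ) : cexp ((σ2 : ℂ) / 2 * zLine R y * (zLine R y - 1) * (T - t)) =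
      complexMGF id (gaussianReal (-(v / 2)) v) (zLine R y) := by
    have hv' : (v : ℂ) = σ2 * (T - t) := by exact_mod_cast congrArg ((↑) : ℝ → ℂ) hv
    rw [complexMGF_id_gaussianReal]
    push_cast
    rw [hv']
    ring_nf
  rw [cashGreek, powerIntegral, ← integral_const_mul]
  congr with y
  rw [hmgf, cpowR_eq_pow_mul_cpowR_sub hs _ n, zLine_sub, ofReal_natCast, priceWeight]
  ring

end BlackScholes

theorem BSprice_integral_representation_and_cash_greeks_general
    (σ T : ℝ) (hσ : σ ≠ 0) (f : ℝ → ℝ) (R : ℝ)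
    (l : ℝ → ℝ) (hl : l = fun x => f (Real.exp x) * Real.exp (-R * x))
    (hlint : Integrable l) :
    ∀ t < T,
      (∀ s : ℝ, 0 < s → (BSprice σ T f t s : ℂ) = cashGreek (σ ^ 2) T R l 0 t s) ∧
      ContDiffOn ℝ (⊤ : ℕ∞) (fun s => BSprice σ T f t s) (Set.Ioi 0) ∧
      (∀ n : ℕ, 1 ≤ n → ∀ s : ℝ, 0 < s →
        ((s ^ n * iteratedDerivWithin n (fun s => BSprice σ T f t s) (Set.Ioi 0) s : ℝ) : ℂ) =
          cashGreek (σ ^ 2) T R l n t s) := by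
  intro t ht
  have hpos : 0 < σ ^ 2 * (T - t) := mul_pos (by positivity) (sub_pos.mpr ht)
  obtain ⟨v, hv⟩ : ∃ v : ℝ≥0, v = σ ^ 2 * (T - t) := ⟨⟨_, hpos.le⟩, rfl⟩
  have hv0 : v ≠ 0 := by rintro rfl; exact hpos.ne hv
  have hdecay := integrable_pow_mul_priceWeight hlint hv0 R
  have hprice : EqOn (ofRealCLM ∘ BSprice σ T f t) (powerIntegral R (priceWeight v R l)) (Ioi 0) :=
    fun s hs ↦ BSprice_eq_powerIntegral hl hlint hv hv0 hs
  have hsmooth : ContDiffOn ℝ ∞ (BSprice σ T f t) (Ioi 0) :=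
    (reCLM.contDiff.comp_contDiffOn (contDiffOn_powerIntegral hdecay R)).congr
      fun s hs ↦ by simp [← hprice hs]
  have hderiv (n : ℕ) (s : ℝ) (hs : 0 < s) :
      ((s ^ n * iteratedDerivWithin n (BSprice σ T f t) (Ioi 0) s : ℝ) : ℂ) =
        cashGreek (σ ^ 2) T R l n t s := by
    rw [cashGreek_eq_pow_mul_powerIntegral l hv hs,
      ← iteratedDerivWithin_powerIntegral hdecay R n hs, ← iteratedDerivWithin_congr hprice hs,
      iteratedDerivWithin_continuousLinearMap_comp ofRealCLM
        ((hsmooth s hs).of_le (mod_cast le_top)) (uniqueDiffOn_Ioi 0) hs]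
    simp
  exact ⟨fun s hs ↦ by simpa using hderiv 0 s hs, hsmooth, fun n _ ↦ hderiv n⟩

/-- integral representation and smoothness of the Black-Scholes price and
its cash greeks. -/
theorem BSprice_integral_representation_and_cash_greeks
    (σ T : ℝ) (hσ : 0 < σ) (hT : 0 < T)
    (f : ℝ → ℝ) (R : ℝ) (hR : R ≠ 0)
    (hf : ContDiffOn ℝ (⊤ : ℕ∞) f (Set.Ioi 0))
    (l : ℝ → ℝ) (hl : l = fun x => f (Real.exp x) * Real.exp (-R * x))
    (hlint : ∀ n : ℕ, Integrable (iteratedDeriv n l)) :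
    ∀ t ∈ Set.Ico 0 T,
      (∀ s : ℝ, 0 < s → (BSprice σ T f t s : ℂ) = cashGreek (σ ^ 2) T R l 0 t s) ∧
      ContDiffOn ℝ (⊤ : ℕ∞) (fun s => BSprice σ T f t s) (Set.Ioi 0) ∧
      (∀ n : ℕ, 1 ≤ n → ∀ s : ℝ, 0 < s →
        ((s ^ n * iteratedDerivWithin n (fun s => BSprice σ T f t s) (Set.Ioi 0) s : ℝ) : ℂ) =
          cashGreek (σ ^ 2) T R l n t s) :=
  fun t ht ↦ BSprice_integral_representation_and_cash_greeks_general σ T hσ.ne' f R l hl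
    (by simpa using hlint 0) t ht.2
end

section
/- With the Lévy–Khintchine data (μ, c, K) and κ as defined, the map (λ,z) ↦ κ(λ,z) on [0,1] × {z ∈ ℂ : Re z ∈ {0, R, 2R}} is twice partially differentiable with respect to λ, the maps κ, ∂_λκ and ∂²_λκ are jointly continuous, and for all λ ∈ [0,1] and such z: ∂_λκ(λ,z) = ½z³·∫(∫₀¹ x³·e^{uλzx}·(1−u)²·(1+λzxu) du) K(dx) and ∂²_λκ(λ,z) = ½z⁴·∫(∫₀¹ x⁴·e^{uλzx}·u(1−u)²·(2+λzxu) du) K(dx). In particular, κ(0,z) = μz + ½σ²z², ∂_λκ(0,z) = (1/6)·m₃·z³ and ∂²_λκ(0,z) = (1/12)·m₄·z⁴, where m₃ := ∫ x³ K(dx), m₄ := ∫ x⁴ K(dx). -/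
open MeasureTheory Complex Set

/-- Cumulant generating function `κ(λ, z)` of the interpolating family. -/
noncomputable def kappa (μ c : ℝ) (K : Measure ℝ) (lam : ℝ) (z : ℂ) : ℂ :=
  if lam = 0 then (μ : ℂ) * z + (((c + ∫ x : ℝ, x ^ 2 ∂K) : ℝ) : ℂ) / 2 * z ^ 2
  else (μ : ℂ) * z + (c : ℂ) / 2 * z ^ 2 +
    ((lam : ℂ) ^ 2)⁻¹ *
      ∫ x : ℝ, (Complex.exp ((lam : ℂ) * z * (x : ℂ)) - 1 - (lam : ℂ) * z * (x : ℂ)) ∂K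

noncomputable def kbar (μ c : ℝ) (K : Measure ℝ) (lam : ℝ) (y z : ℂ) : ℂ :=
  kappa μ c K lam (y + z) - kappa μ c K lam y - kappa μ c K lam z

noncomputable def gamLK (μ c : ℝ) (K : Measure ℝ) (lam : ℝ) (z : ℂ) : ℂ :=
  kbar μ c K lam z 1 / kbar μ c K lam 1 1

noncomputable def etaLK (μ c : ℝ) (K : Measure ℝ) (lam : ℝ) (z : ℂ) : ℂ :=
  kappa μ c K lam z - kappa μ c K lam 1 * gamLK μ c K lam z

/-- First partial derivative of `κ` in `λ` (explicit integral formula). -/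
noncomputable def kappaD1 (K : Measure ℝ) (lam : ℝ) (z : ℂ) : ℂ :=
  (1 / 2 : ℂ) * z ^ 3 *
    ∫ x : ℝ,
      (∫ u in (0 : ℝ)..1,
        (x : ℂ) ^ 3 * Complex.exp ((u : ℂ) * (lam : ℂ) * z * (x : ℂ)) *
          ((1 : ℂ) - (u : ℂ)) ^ 2 * (1 + (lam : ℂ) * z * (x : ℂ) * (u : ℂ))) ∂K

/-- Second partial derivative of `κ` in `λ` (explicit integral formula). -/
noncomputable def kappaD2 (K : Measure ℝ) (lam : ℝ) (z : ℂ) : ℂ :=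
  (1 / 2 : ℂ) * z ^ 4 *
    ∫ x : ℝ,
      (∫ u in (0 : ℝ)..1,
        (x : ℂ) ^ 4 * Complex.exp ((u : ℂ) * (lam : ℂ) * z * (x : ℂ)) *
          (u : ℂ) * ((1 : ℂ) - (u : ℂ)) ^ 2 * (2 + (lam : ℂ) * z * (x : ℂ) * (u : ℂ))) ∂K

/-!
Taylor's formula `exp w - 1 - w = w ^ 2 * ∫ u in 0..1, (1 - u) * exp (u * w)` absorbs the factor
`lam⁻²` and gives, for every `lam` including `0`,
`kappa lam z = μ * z + c / 2 * z ^ 2 + z ^ 2 * G (lam * z)`, where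
`G w = ∫ x, ∫ u in 0..1, (1 - u) * x ^ 2 * exp (w * u * x) ∂K` is the complex moment generating
function of the random variable `u * x` under the finite measure `(1 - u) du ⊗ x ^ 2 K(dx)`. Such a
function is holomorphic on a strip, so each derivative in `lam` brings out a factor `z` and replaces
`G` by its derivative; joint continuity is continuity of `G`, `G'` and `G''`. An integration by
parts in `u` puts `z ^ 3 * G'` and `z ^ 4 * G''` into the form of `kappaD1` and `kappaD2`.
-/

open ProbabilityTheory

/-- The measure `(1 - u) du` on `(0, 1]`. Its Laplace transform is the remainder kernel
`(exp w - 1 - w) / w ^ 2` of the first-order Taylor expansion of `exp`, without the removable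
singularity at `w = 0`. -/
noncomputable def taylorMeasure : Measure ℝ :=
  (volume.restrict (Ioc 0 1)).withDensity fun u ↦ ENNReal.ofReal (1 - u)

/-- The measure `x ^ 2 K(dx)`, which is finite for the Lévy measure `K` of a square-integrable
process even when `K` is not. -/
noncomputable def secondMomentMeasure (K : Measure ℝ) : Measure ℝ :=
  K.withDensity fun x ↦ ENNReal.ofReal (x ^ 2)

/-- The `k`-th derivative of the complex moment generating function of the product `u * x` under
`taylorMeasure ⊗ ν`, written as an iterated integral. -/
noncomputable def taylorTransform (ν : Measure ℝ) (k : ℕ) (w : ℂ) : ℂ :=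
  ∫ x : ℝ, ∫ u : ℝ, (u * x : ℂ) ^ k * cexp (w * (u * x)) ∂taylorMeasure ∂ν

section TaylorMeasure

instance : IsFiniteMeasure taylorMeasure :=
  isFiniteMeasure_withDensity_ofReal
    (Continuous.integrableOn_Ioc (f := fun u : ℝ ↦ 1 - u) (by fun_prop)).2

lemma ae_taylorMeasure_mem_Icc : ∀ᵐ u ∂taylorMeasure, u ∈ Icc (0 : ℝ) 1 :=
  (withDensity_absolutelyContinuous _ _).ae_le <|
    (ae_restrict_mem measurableSet_Ioc).mono fun _ hu ↦ Ioc_subset_Icc_self hu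

lemma integral_taylorMeasure {E : Type*} [NormedAddCommGroup E] [NormedSpace ℝ E] (f : ℝ → E) :
    ∫ u, f u ∂taylorMeasure = ∫ u in (0 : ℝ)..1, (1 - u) • f u := by
  rw [taylorMeasure, integral_withDensity_eq_integral_toReal_smul (by fun_prop) (by simp),
    intervalIntegral.integral_of_le zero_le_one]
  refine setIntegral_congr_fun measurableSet_Ioc fun u hu ↦ ?_
  simp only [ENNReal.toReal_ofReal (sub_nonneg.2 hu.2)]

lemma exp_sub_one_sub_eq_sq_mul_integral_taylorMeasure (w : ℂ) :
    cexp w - 1 - w = w ^ 2 * ∫ u : ℝ, cexp (w * u) ∂taylorMeasure := by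
  have hderiv (u : ℝ) : HasDerivAt
      (fun u : ℝ ↦ (1 - (u : ℂ)) * cexp (w * u) * w + cexp (w * u))
      (w ^ 2 * ((1 - u) • cexp (w * u))) u := by
    have hu : HasDerivAt (fun u : ℝ ↦ (u : ℂ)) 1 u := ofRealCLM.hasDerivAt
    have hexp := (hu.const_mul w).cexp
    refine ((((hu.const_sub 1).mul hexp).mul_const w).add hexp).congr_deriv ?_
    simp only [real_smul, ofReal_sub, ofReal_one]
    ring
  rw [integral_taylorMeasure, ← intervalIntegral.integral_const_mul,
    intervalIntegral.integral_eq_sub_of_hasDerivAt (fun u _ ↦ hderiv u)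
      (Continuous.intervalIntegrable (by fun_prop) _ _)]
  simp only [ofReal_one, ofReal_zero, mul_one, mul_zero, exp_zero]
  ring

/- Integration by parts: the difference of the two sides is the integral over `[0, 1]` of the
derivative of `(1 - u) ^ 2 * u ^ (k + 1) * exp (w * u)`. -/
lemma integral_pow_mul_one_sub_sq_mul_exp (k : ℕ) (w : ℂ) :
    ∫ u in (0 : ℝ)..1, (u : ℂ) ^ k * (1 - u) ^ 2 * (k + 1 + w * u) * cexp (w * u) =
      2 * ∫ u : ℝ, (u : ℂ) ^ (k + 1) * cexp (w * u) ∂taylorMeasure := by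
  have hderiv (u : ℝ) : HasDerivAt
      (fun u : ℝ ↦ (1 - (u : ℂ)) ^ 2 * (u : ℂ) ^ (k + 1) * cexp (w * u))
      ((u : ℂ) ^ k * (1 - u) ^ 2 * (k + 1 + w * u) * cexp (w * u) -
        2 * ((1 - u) • ((u : ℂ) ^ (k + 1) * cexp (w * u)))) u := by
    have hu : HasDerivAt (fun u : ℝ ↦ (u : ℂ)) 1 u := ofRealCLM.hasDerivAt
    refine ((((hu.const_sub 1).pow 2).mul (hu.pow (k + 1))).mul
      (hu.const_mul w).cexp).congr_deriv ?_
    simp only [real_smul, ofReal_sub, ofReal_one, Nat.cast_add, Nat.cast_one,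
      add_tsub_cancel_right, Pi.mul_apply, Pi.pow_apply]
    ring
  rw [integral_taylorMeasure, ← intervalIntegral.integral_const_mul, ← sub_eq_zero,
    ← intervalIntegral.integral_sub (Continuous.intervalIntegrable (by fun_prop) _ _)
      (Continuous.intervalIntegrable (by fun_prop) _ _),
    intervalIntegral.integral_eq_sub_of_hasDerivAt (fun u _ ↦ hderiv u)
      (Continuous.intervalIntegrable (by fun_prop) _ _)]
  simp

lemma integral_pow_taylorMeasure (k : ℕ) :
    ∫ u : ℝ, u ^ k ∂taylorMeasure = 1 / ((k + 1) * (k + 2)) := by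
  have hsplit (u : ℝ) : (1 - u) • u ^ k = u ^ k - u ^ (k + 1) := by rw [smul_eq_mul]; ring
  simp_rw [integral_taylorMeasure, hsplit]
  rw [intervalIntegral.integral_sub (by simp) (by simp), integral_pow, integral_pow]
  push_cast
  simp only [one_pow, ne_eq, Nat.succ_ne_zero, not_false_eq_true, zero_pow, sub_zero]
  field_simp
  ring

end TaylorMeasure

section ProductMeasure

lemma exp_mul_le_one_add_exp {u : ℝ} (hu : u ∈ Icc (0 : ℝ) 1) (y : ℝ) :
    Real.exp (u * y) ≤ 1 + Real.exp y := by
  rcases le_total y 0 with hy | hy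
  · have := Real.exp_le_one_iff.2 (mul_nonpos_of_nonneg_of_nonpos hu.1 hy)
    linarith [Real.exp_pos y]
  · have := Real.exp_le_exp.2 (mul_le_of_le_one_left hy hu.2)
    linarith

variable {τ ν : Measure ℝ} [IsFiniteMeasure τ] [IsFiniteMeasure ν]

lemma integrableExpSet_subset_integrableExpSet_mul_prod (hτ : ∀ᵐ u ∂τ, u ∈ Icc (0 : ℝ) 1) :
    integrableExpSet id ν ⊆ integrableExpSet (fun p : ℝ × ℝ ↦ p.1 * p.2) (τ.prod ν) := by
  intro s hs
  have hdom : Integrable (fun p : ℝ × ℝ ↦ 1 + Real.exp (s * p.2)) (τ.prod ν) :=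
    (integrable_const 1).add (Integrable.comp_snd (f := fun x ↦ Real.exp (s * x)) hs τ)
  refine hdom.mono' (by fun_prop) ?_
  filter_upwards [Measure.quasiMeasurePreserving_fst.ae hτ] with p hp
  rw [Real.norm_of_nonneg (Real.exp_pos _).le, mul_left_comm]
  exact exp_mul_le_one_add_exp hp _

end ProductMeasure

section TaylorTransform

lemma taylorTransform_zero (ν : Measure ℝ) (k : ℕ) :
    taylorTransform ν k 0 = ((∫ x : ℝ, x ^ k ∂ν : ℝ) : ℂ) / ((k + 1) * (k + 2)) := by
  simp only [taylorTransform, zero_mul, exp_zero, mul_one, mul_pow, integral_mul_const,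
    integral_const_mul, ← ofReal_pow, integral_complex_ofReal, integral_pow_taylorMeasure]
  push_cast
  ring

variable {ν : Measure ℝ} [IsFiniteMeasure ν] {w : ℂ}

lemma integral_prod_pow_mul_exp_eq_taylorTransform
    (hw : w.re ∈ interior (integrableExpSet id ν)) (k : ℕ) :
    ∫ p : ℝ × ℝ, ((p.1 * p.2 : ℝ) : ℂ) ^ k * cexp (w * (p.1 * p.2 : ℝ)) ∂taylorMeasure.prod ν =
      taylorTransform ν k w := by
  rw [integral_prod_symm _ (integrable_pow_mul_cexp_of_re_mem_interior_integrableExpSet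
    (interior_mono (integrableExpSet_subset_integrableExpSet_mul_prod
      ae_taylorMeasure_mem_Icc) hw) k)]
  simp only [taylorTransform, ofReal_mul]

lemma hasDerivAt_taylorTransform (hw : w.re ∈ interior (integrableExpSet id ν)) (k : ℕ) :
    HasDerivAt (taylorTransform ν k) (taylorTransform ν (k + 1) w) w := by
  have hderiv := hasDerivAt_integral_pow_mul_exp (interior_mono
    (integrableExpSet_subset_integrableExpSet_mul_prod ae_taylorMeasure_mem_Icc) hw) k
  rw [integral_prod_pow_mul_exp_eq_taylorTransform hw] at hderiv
  refine hderiv.congr_of_eventuallyEq ?_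
  filter_upwards [(isOpen_interior.preimage continuous_re).mem_nhds hw] with v hv
  exact (integral_prod_pow_mul_exp_eq_taylorTransform hv k).symm

lemma hasDerivAt_taylorTransform_ofReal_mul {l : ℝ} {z : ℂ}
    (hlz : l * z.re ∈ interior (integrableExpSet id ν)) (k : ℕ) :
    HasDerivAt (fun t : ℝ ↦ taylorTransform ν k (t * z))
      (z * taylorTransform ν (k + 1) (l * z)) l := by
  have hlin : HasDerivAt (fun t : ℝ ↦ (t : ℂ) * z) z l := by
    simpa using (ofRealCLM.hasDerivAt (x := l)).mul_const z
  rw [mul_comm z]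
  exact (hasDerivAt_taylorTransform (by rwa [re_ofReal_mul]) k).comp l hlin

lemma continuousOn_taylorTransform_ofReal_mul (k : ℕ) :
    ContinuousOn (fun q : ℝ × ℂ ↦ taylorTransform ν k (q.1 * q.2))
      {q | q.1 * q.2.re ∈ interior (integrableExpSet id ν)} := fun q hq ↦
  (ContinuousAt.comp (f := fun q : ℝ × ℂ ↦ (q.1 : ℂ) * q.2)
    (hasDerivAt_taylorTransform (by rwa [re_ofReal_mul]) k).continuousAt
    (by fun_prop)).continuousWithinAt

end TaylorTransform

section SecondMomentMeasure

variable (K : Measure ℝ)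

lemma integral_secondMomentMeasure {E : Type*} [NormedAddCommGroup E] [NormedSpace ℝ E]
    (f : ℝ → E) : ∫ x, f x ∂secondMomentMeasure K = ∫ x, x ^ 2 • f x ∂K := by
  rw [secondMomentMeasure, integral_withDensity_eq_integral_toReal_smul (by fun_prop) (by simp)]
  simp only [ENNReal.toReal_ofReal (sq_nonneg _)]

lemma integral_pow_secondMomentMeasure (k : ℕ) :
    ∫ x, x ^ k ∂secondMomentMeasure K = ∫ x, x ^ (k + 2) ∂K := by
  simp only [integral_secondMomentMeasure, smul_eq_mul, ← pow_add, add_comm 2]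

lemma taylorTransform_secondMomentMeasure (k : ℕ) (w : ℂ) :
    taylorTransform (secondMomentMeasure K) k w =
      ∫ x : ℝ, (x : ℂ) ^ (k + 2) *
        ∫ u : ℝ, (u : ℂ) ^ k * cexp (w * x * u) ∂taylorMeasure ∂K := by
  rw [taylorTransform, integral_secondMomentMeasure]
  congr with x
  rw [real_smul, ← integral_const_mul, ← integral_const_mul]
  congr with u
  rw [ofReal_pow, mul_pow, mul_comm (u : ℂ) x, ← mul_assoc w]
  ring

lemma integral_integral_eq_two_mul_taylorTransform_succ (k : ℕ) (w : ℂ) :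
    ∫ x : ℝ, (∫ u in (0 : ℝ)..1, (x : ℂ) ^ (k + 3) *
        ((u : ℂ) ^ k * (1 - u) ^ 2 * (k + 1 + w * x * u) * cexp (w * x * u))) ∂K =
      2 * taylorTransform (secondMomentMeasure K) (k + 1) w := by
  simp_rw [intervalIntegral.integral_const_mul, integral_pow_mul_one_sub_sq_mul_exp,
    mul_left_comm _ (2 : ℂ), integral_const_mul, taylorTransform_secondMomentMeasure]

variable {K}

lemma integrableOn_pow_abs_mul_exp {a b : ℝ}
    (hKexp : ∀ s ∈ Ioo a b,
      ∫⁻ x in {x : ℝ | 1 ≤ |x|}, ENNReal.ofReal (Real.exp (s * x)) ∂K ≠ ⊤)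
    {s : ℝ} (hs : s ∈ Ioo a b) (k : ℕ) :
    IntegrableOn (fun x ↦ |x| ^ k * Real.exp (s * x)) {x | 1 ≤ |x|} K := by
  have hsub : Ioo a b ⊆ integrableExpSet id (K.restrict {x | 1 ≤ |x|}) := fun t ht ↦
    (lintegral_ofReal_ne_top_iff_integrable (by fun_prop)
      (ae_of_all _ fun x ↦ (Real.exp_pos _).le)).1 (hKexp t ht)
  exact integrable_pow_abs_mul_exp_of_mem_interior_integrableExpSet
    (interior_maximal hsub isOpen_Ioo hs) k

lemma integrableOn_sq_mul_exp_compl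
    (hKmin : ∫⁻ x : ℝ, ENNReal.ofReal (min 1 (x ^ 2)) ∂K ≠ ⊤) (s : ℝ) :
    IntegrableOn (fun x ↦ x ^ 2 * Real.exp (s * x)) {x | 1 ≤ |x|}ᶜ K := by
  have hmin : Integrable (fun x : ℝ ↦ min 1 (x ^ 2)) K :=
    (lintegral_ofReal_ne_top_iff_integrable (by fun_prop)
      (ae_of_all _ fun x ↦ by positivity)).1 hKmin
  refine (hmin.mul_const (Real.exp |s|)).integrableOn.mono' (by fun_prop) ?_
  have hmeas : MeasurableSet {x : ℝ | 1 ≤ |x|}ᶜ :=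
    (measurableSet_le (by fun_prop) (by fun_prop)).compl
  filter_upwards [ae_restrict_mem hmeas] with x hx
  have hx1 : |x| ≤ 1 := le_of_not_ge hx
  have hsx : s * x ≤ |s| := (le_abs_self _).trans <| by
    rw [abs_mul]; exact mul_le_of_le_one_right (abs_nonneg s) hx1
  rw [Real.norm_of_nonneg (by positivity), min_eq_right ((sq_le_one_iff_abs_le_one x).2 hx1)]
  gcongr

lemma Ioo_subset_integrableExpSet_secondMomentMeasure {a b : ℝ}
    (hKmin : ∫⁻ x : ℝ, ENNReal.ofReal (min 1 (x ^ 2)) ∂K ≠ ⊤)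
    (hKexp : ∀ s ∈ Ioo a b,
      ∫⁻ x in {x : ℝ | 1 ≤ |x|}, ENNReal.ofReal (Real.exp (s * x)) ∂K ≠ ⊤) :
    Ioo a b ⊆ integrableExpSet id (secondMomentMeasure K) := by
  intro s hs
  have hlarge := integrableOn_pow_abs_mul_exp hKexp hs 2
  simp only [sq_abs] at hlarge
  have hK : Integrable (fun x ↦ x ^ 2 * Real.exp (s * x)) K := by
    rw [← integrableOn_univ, ← union_compl_self {x : ℝ | 1 ≤ |x|}]
    exact hlarge.union (integrableOn_sq_mul_exp_compl hKmin s)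
  refine (integrable_withDensity_iff_integrable_smul' (by fun_prop) (by simp)).2 ?_
  simpa only [ENNReal.toReal_ofReal (sq_nonneg _), smul_eq_mul, id_eq] using hK

end SecondMomentMeasure

lemma isFiniteMeasure_of_zero_mem_integrableExpSet {Ω : Type*} {mΩ : MeasurableSpace Ω}
    {ν : Measure Ω} {X : Ω → ℝ} (h : 0 ∈ integrableExpSet X ν) : IsFiniteMeasure ν := by
  simpa [integrableExpSet, integrable_const_iff_isFiniteMeasure] using h

section Kappa

variable (μ c : ℝ) (K : Measure ℝ) (l : ℝ) (z : ℂ)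

lemma kappa_eq_taylorTransform :
    kappa μ c K l z = μ * z + c / 2 * z ^ 2 +
      z ^ 2 * taylorTransform (secondMomentMeasure K) 0 (l * z) := by
  rw [kappa]
  split_ifs with hl
  · rw [hl, ofReal_zero, zero_mul, taylorTransform_zero, integral_pow_secondMomentMeasure]
    push_cast
    ring
  · have hl' : (l : ℂ) ≠ 0 := ofReal_ne_zero.2 hl
    rw [taylorTransform_secondMomentMeasure, ← integral_const_mul, ← integral_const_mul]
    congr with x
    rw [exp_sub_one_sub_eq_sq_mul_integral_taylorMeasure]
    simp only [pow_zero, one_mul, zero_add]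
    field_simp

lemma kappaD1_eq_taylorTransform :
    kappaD1 K l z = z ^ 3 * taylorTransform (secondMomentMeasure K) 1 (l * z) := by
  have hsucc := integral_integral_eq_two_mul_taylorTransform_succ K 0 (l * z)
  calc kappaD1 K l z = 1 / 2 * z ^ 3 * (2 * taylorTransform (secondMomentMeasure K) 1 (l * z)) := by
        rw [kappaD1, ← hsucc]
        congr 2 with x
        congr with u
        rw [show (u * l * z * x : ℂ) = l * z * x * u by ring]
        push_cast
        ring
    _ = _ := by ring

lemma kappaD2_eq_taylorTransform :
    kappaD2 K l z = z ^ 4 * taylorTransform (secondMomentMeasure K) 2 (l * z) := by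
  have hsucc := integral_integral_eq_two_mul_taylorTransform_succ K 1 (l * z)
  calc kappaD2 K l z = 1 / 2 * z ^ 4 * (2 * taylorTransform (secondMomentMeasure K) 2 (l * z)) := by
        rw [kappaD2, ← hsucc]
        congr 2 with x
        congr with u
        rw [show (u * l * z * x : ℂ) = l * z * x * u by ring]
        push_cast
        ring
    _ = _ := by ring

end Kappa

lemma mul_re_mem_of_re_mem {R l : ℝ} {z : ℂ} {s : Set ℝ} (hs : Convex ℝ s) (h0 : 0 ∈ s)
    (h2R : 2 * R ∈ s) (hl : l ∈ Icc (0 : ℝ) 1) (hz : z.re ∈ ({0, R, 2 * R} : Set ℝ)) :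
    l * z.re ∈ s := by
  suffices z.re ∈ s from hs.smul_mem_of_zero_mem h0 this hl
  rcases hz with hz | hz | hz
  · rwa [hz]
  · have hhalf : (1 / 2 : ℝ) • (2 * R) ∈ s :=
      hs.smul_mem_of_zero_mem h0 h2R ⟨by norm_num, by norm_num⟩
    rw [hz]
    convert hhalf using 1
    rw [smul_eq_mul]
    ring
  · rwa [hz]

theorem kappa_twice_differentiable_in_lambda_general
    (μ c : ℝ) (K : Measure ℝ)
    (hKmin : ∫⁻ x : ℝ, ENNReal.ofReal (min 1 (x ^ 2)) ∂K ≠ ⊤)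
    (a b : ℝ) (h0 : (0 : ℝ) ∈ Ioo a b)
    (hKexp : ∀ s ∈ Ioo a b,
      ∫⁻ x in {x : ℝ | 1 ≤ |x|}, ENNReal.ofReal (Real.exp (s * x)) ∂K ≠ ⊤)
    (σ2 : ℝ) (hσ2 : σ2 = c + ∫ x : ℝ, x ^ 2 ∂K) :
    (∀ (lam : ℝ) (z : ℂ), lam * z.re ∈ Ioo a b →
      HasDerivAt (fun l ↦ kappa μ c K l z) (kappaD1 K lam z) lam ∧
      HasDerivAt (fun l ↦ kappaD1 K l z) (kappaD2 K lam z) lam) ∧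
    ContinuousOn (fun q : ℝ × ℂ ↦ kappa μ c K q.1 q.2) {q | q.1 * q.2.re ∈ Ioo a b} ∧
    ContinuousOn (fun q : ℝ × ℂ ↦ kappaD1 K q.1 q.2) {q | q.1 * q.2.re ∈ Ioo a b} ∧
    ContinuousOn (fun q : ℝ × ℂ ↦ kappaD2 K q.1 q.2) {q | q.1 * q.2.re ∈ Ioo a b} ∧
    ∀ z : ℂ,
      kappa μ c K 0 z = (μ : ℂ) * z + (σ2 : ℂ) / 2 * z ^ 2 ∧
      kappaD1 K 0 z = ((∫ x : ℝ, x ^ 3 ∂K : ℝ) : ℂ) / 6 * z ^ 3 ∧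
      kappaD2 K 0 z = ((∫ x : ℝ, x ^ 4 ∂K : ℝ) : ℂ) / 12 * z ^ 4 := by
  have hJ := Ioo_subset_integrableExpSet_secondMomentMeasure hKmin hKexp
  have : IsFiniteMeasure (secondMomentMeasure K) :=
    isFiniteMeasure_of_zero_mem_integrableExpSet (hJ h0)
  have hJ' := interior_maximal hJ isOpen_Ioo
  have hcont (k : ℕ) : ContinuousOn
      (fun q : ℝ × ℂ ↦ taylorTransform (secondMomentMeasure K) k (q.1 * q.2))
      {q | q.1 * q.2.re ∈ Ioo a b} :=
    (continuousOn_taylorTransform_ofReal_mul k).mono fun _ hq ↦ hJ' hq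
  simp_rw [kappaD2_eq_taylorTransform, kappaD1_eq_taylorTransform, kappa_eq_taylorTransform]
  refine ⟨fun l z hlz ↦ ⟨?_, ?_⟩, ?_, ?_, ?_, fun z ↦ ?_⟩
  · have hderiv := hasDerivAt_taylorTransform_ofReal_mul (hJ' hlz) 0
    exact ((hderiv.const_mul (z ^ 2)).const_add _).congr_deriv (by ring)
  · have hderiv := hasDerivAt_taylorTransform_ofReal_mul (hJ' hlz) 1
    exact (hderiv.const_mul (z ^ 3)).congr_deriv (by ring)
  · exact ContinuousOn.add (by fun_prop) (ContinuousOn.mul (by fun_prop) (hcont 0))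
  · exact ContinuousOn.mul (by fun_prop) (hcont 1)
  · exact ContinuousOn.mul (by fun_prop) (hcont 2)
  · simp only [ofReal_zero, zero_mul, taylorTransform_zero, integral_pow_secondMomentMeasure, hσ2]
    push_cast
    refine ⟨?_, ?_, ?_⟩ <;> ring

/-- `κ` is twice continuously partially differentiable in `λ`, with the given
derivatives and values at `λ = 0` (Proposition `kappa`). -/
theorem kappa_twice_differentiable_in_lambda
    (μ c : ℝ) (hc : 0 ≤ c) (K : MeasureTheory.Measure ℝ)
    (hK0 : K {0} = 0)
    (hKmin : ∫⁻ x : ℝ, ENNReal.ofReal (min 1 (x ^ 2)) ∂K ≠ ⊤)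
    (R : ℝ) (hR : R ≠ 0) (a b : ℝ)
    (h0 : (0 : ℝ) ∈ Set.Ioo a b) (h2 : (2 : ℝ) ∈ Set.Ioo a b)
    (h2R : 2 * R ∈ Set.Ioo a b)
    (hK5 : ∫⁻ x in {x : ℝ | 1 ≤ |x|}, ENNReal.ofReal (|x| ^ 5) ∂K ≠ ⊤)
    (hKexp : ∀ s ∈ Set.Ioo a b,
      ∫⁻ x in {x : ℝ | 1 ≤ |x|}, ENNReal.ofReal (Real.exp (s * x)) ∂K ≠ ⊤)
    (σ2 : ℝ) (hσ2 : σ2 = c + ∫ x : ℝ, x ^ 2 ∂K) (hσ2pos : 0 < σ2)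
    :
    (∀ lam ∈ Set.Icc (0 : ℝ) 1, ∀ z : ℂ, z.re ∈ ({0, R, 2 * R} : Set ℝ) →
      HasDerivWithinAt (fun l => kappa μ c K l z) (kappaD1 K lam z) (Set.Icc 0 1) lam ∧
      HasDerivWithinAt (fun l => kappaD1 K l z) (kappaD2 K lam z) (Set.Icc 0 1) lam) ∧
    ContinuousOn (fun q : ℝ × ℂ => kappa μ c K q.1 q.2)
      (Set.Icc 0 1 ×ˢ {z : ℂ | z.re ∈ ({0, R, 2 * R} : Set ℝ)}) ∧
    ContinuousOn (fun q : ℝ × ℂ => kappaD1 K q.1 q.2)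
      (Set.Icc 0 1 ×ˢ {z : ℂ | z.re ∈ ({0, R, 2 * R} : Set ℝ)}) ∧
    ContinuousOn (fun q : ℝ × ℂ => kappaD2 K q.1 q.2)
      (Set.Icc 0 1 ×ˢ {z : ℂ | z.re ∈ ({0, R, 2 * R} : Set ℝ)}) ∧
    (∀ z : ℂ, z.re ∈ ({0, R, 2 * R} : Set ℝ) →
      kappa μ c K 0 z = (μ : ℂ) * z + ((σ2 : ℝ) : ℂ) / 2 * z ^ 2 ∧
      kappaD1 K 0 z = (((∫ x : ℝ, x ^ 3 ∂K) : ℝ) : ℂ) / 6 * z ^ 3 ∧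
      kappaD2 K 0 z = (((∫ x : ℝ, x ^ 4 ∂K) : ℝ) : ℂ) / 12 * z ^ 4) := by
  obtain ⟨hderiv, hcont, hcont1, hcont2, hzero⟩ :=
    kappa_twice_differentiable_in_lambda_general μ c K hKmin a b h0 hKexp σ2 hσ2
  have hmem {l : ℝ} (hl : l ∈ Icc (0 : ℝ) 1) {z : ℂ} (hz : z.re ∈ ({0, R, 2 * R} : Set ℝ)) :
      l * z.re ∈ Ioo a b := mul_re_mem_of_re_mem (convex_Ioo a b) h0 h2R hl hz
  exact ⟨fun l hl z hz ↦ (hderiv l z (hmem hl hz)).imp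
      HasDerivAt.hasDerivWithinAt HasDerivAt.hasDerivWithinAt,
    hcont.mono fun q hq ↦ hmem hq.1 hq.2, hcont1.mono fun q hq ↦ hmem hq.1 hq.2,
    hcont2.mono fun q hq ↦ hmem hq.1 hq.2, fun z _ ↦ hzero z⟩
end

section
/- With the Lévy–Khintchine data (μ, c, K), κ, κ̄, γ and η as defined, the map (λ,z) ↦ e^{Re η(λ,z)} is bounded on [0,1] × {z ∈ ℂ : Re z = R}; equivalently, sup over λ ∈ [0,1] and z with Re z = R of Re η(λ,z) is finite. -/
open MeasureTheory Complex Set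

open ProbabilityTheory

/-!
Put `ν = c δ₀ + x² K(dx)`, a finite measure of mass `σ² > 0`. Kolmogorov's representation
`κ(λ, z) = μ z + ∫ (e^{hz} - 1 - hz) / h² ν(dx)`, `h = λ x`, holds for all `λ ∈ [0, 1]`, with the
kernel read as `z² / 2` at `h = 0`, so the case `λ = 0` and the Gaussian part need no separate
treatment.

Here `η(λ, z) = κ(λ, z) - g κ̄(λ; z, 1)` with `g = κ(λ, 1) / κ̄(λ; 1, 1)` real and bounded in `λ`,
since `κ̄(λ; 1, 1) = ∫ ((e^h - 1) / h)² dν ≥ ∫ (1 + |x|)⁻² dν > 0`. Passing from `z = R` to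
`z = R + iy` changes the integrand of `Re η` by `e^{hR} (g (e^h - 1) - 1) (1 - cos hy) / h²`.
The last quotient is not bounded in `y`, but where `g (e^h - 1) - 1` is positive `h` is not small:
`g (e^h - 1) - 1 ≤ (g² + 1) / 2 · h² (1 + e^h)`, and the factor `h²` turns the quotient into
`1 - cos hy ≤ 2`.
-/

section ExponentialInequalities

lemma norm_cexp_sub_one_sub_id_le_sq_mul (w : ℂ) :
    ‖exp w - 1 - w‖ ≤ ‖w‖ ^ 2 * (2 + Real.exp w.re) := by
  have hpos := Real.exp_pos w.re
  rcases le_total ‖w‖ 1 with hw | hw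
  · calc ‖exp w - 1 - w‖ ≤ ‖w‖ ^ 2 := norm_exp_sub_one_sub_id_le hw
      _ ≤ ‖w‖ ^ 2 * (2 + Real.exp w.re) := le_mul_of_one_le_right (sq_nonneg _) (by linarith)
  · have htri : ‖exp w - 1 - w‖ ≤ Real.exp w.re + 1 + ‖w‖ := by
      simpa [norm_exp] using (norm_sub_le (exp w - 1) w).trans
        (add_le_add_left (norm_sub_le (exp w) 1) ‖w‖)
    have hsq : ‖w‖ ≤ ‖w‖ ^ 2 := le_self_pow₀ hw two_ne_zero
    nlinarith

lemma rexp_mul_le_one_add_rexp {l : ℝ} (hl : l ∈ Icc (0 : ℝ) 1) (t : ℝ) :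
    Real.exp (l * t) ≤ 1 + Real.exp t := by
  have hmax : l * t ≤ max 0 t := by
    rcases le_total 0 t with ht | ht
    · exact (mul_le_of_le_one_left ht hl.2).trans (le_max_right _ _)
    · exact (mul_nonpos_of_nonneg_of_nonpos hl.1 ht).trans (le_max_left _ _)
  calc Real.exp (l * t) ≤ Real.exp (max 0 t) := Real.exp_le_exp.2 hmax
    _ = max 1 (Real.exp t) := by rw [Real.exp_monotone.map_max, Real.exp_zero]
    _ ≤ 1 + Real.exp t := max_le_add_of_nonneg zero_le_one (Real.exp_pos t).le

lemma rexp_mul_one_sub_le_one (u : ℝ) : Real.exp u * (1 - u) ≤ 1 := by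
  calc Real.exp u * (1 - u) ≤ Real.exp u * Real.exp (-u) := by
        gcongr; exact Real.one_sub_le_exp_neg u
    _ = 1 := by rw [← Real.exp_add, add_neg_cancel, Real.exp_zero]

lemma abs_le_one_add_abs_mul_abs_rexp_sub_one (u : ℝ) :
    |u| ≤ (1 + |u|) * |Real.exp u - 1| := by
  rcases le_total 0 u with hu | hu
  · have hexp := Real.add_one_le_exp u
    rw [abs_of_nonneg hu, abs_of_nonneg (by linarith)]
    nlinarith
  · have hexp : Real.exp u ≤ 1 := Real.exp_le_one_iff.2 hu
    rw [abs_of_nonpos hu, abs_of_nonpos (by linarith)]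
    linarith [rexp_mul_one_sub_le_one u]

lemma mul_rexp_sub_one_sub_one_le (g u : ℝ) :
    g * (Real.exp u - 1) - 1 ≤ (g ^ 2 + 1) / 2 * (u ^ 2 * (1 + Real.exp u)) := by
  have hpos := Real.exp_pos u
  rcases le_total 0 u with hu | hu
  · have hupper : Real.exp u - 1 ≤ u * Real.exp u := by linarith [rexp_mul_one_sub_le_one u]
    have hlower : 0 ≤ Real.exp u - 1 := by linarith [Real.one_le_exp hu]
    have hamgm : |g| * u ≤ 1 / 2 + g ^ 2 * u ^ 2 / 2 := by
      rw [← sq_abs g]; linarith [sq_nonneg (|g| * u - 1)]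
    have hhalf : Real.exp u / 2 - 1 ≤ u ^ 2 / 2 * Real.exp u := by
      nlinarith [mul_nonneg hpos.le (sq_nonneg (u - 1)), rexp_mul_one_sub_le_one u]
    calc g * (Real.exp u - 1) - 1 ≤ |g| * (u * Real.exp u) - 1 := by
          gcongr; exact le_abs_self g
      _ ≤ (1 / 2 + g ^ 2 * u ^ 2 / 2) * Real.exp u - 1 := by rw [← mul_assoc]; gcongr
      _ ≤ (g ^ 2 + 1) / 2 * (u ^ 2 * Real.exp u) := by linarith
      _ ≤ (g ^ 2 + 1) / 2 * (u ^ 2 * (1 + Real.exp u)) := by gcongr; linarith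
  · have hupper : Real.exp u ≤ 1 := Real.exp_le_one_iff.2 hu
    have hsq : (Real.exp u - 1) ^ 2 ≤ u ^ 2 := by
      rw [sq_le_sq, abs_of_nonpos hu, abs_of_nonpos (by linarith)]
      linarith [Real.add_one_le_exp u]
    calc g * (Real.exp u - 1) - 1 ≤ g ^ 2 / 2 * (Real.exp u - 1) ^ 2 := by
          linarith [sq_nonneg (g * (Real.exp u - 1) - 1)]
      _ ≤ (g ^ 2 + 1) / 2 * (u ^ 2 * (1 + Real.exp u)) := by
          gcongr
          · linarith
          · exact hsq.trans (le_mul_of_one_le_right (sq_nonneg u) (by linarith))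

end ExponentialInequalities

section KolmogorovKernel

/-- `(1 - cos (h y)) / h²`, extended continuously by `y² / 2` at `h = 0`: the oscillating part of
the real part of Kolmogorov's kernel. The square of `sinc` encodes the half-angle formula. -/
noncomputable def versineQuotient (h y : ℝ) : ℝ := y ^ 2 / 2 * Real.sinc (h * y / 2) ^ 2

lemma versineQuotient_nonneg (h y : ℝ) : 0 ≤ versineQuotient h y := by
  unfold versineQuotient; positivity

lemma sq_mul_versineQuotient (h y : ℝ) : h ^ 2 * versineQuotient h y = 1 - Real.cos (h * y) := by
  have hsin : h * y / 2 * Real.sinc (h * y / 2) = Real.sin (h * y / 2) := by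
    rcases eq_or_ne (h * y / 2) 0 with h0 | h0
    · simp [h0]
    · rw [Real.sinc_of_ne_zero h0, mul_div_cancel₀ _ h0]
  have hcos : Real.cos (h * y) = 1 - 2 * Real.sin (h * y / 2) ^ 2 := by
    rw [← Real.cos_two_mul_eq_one_sub, mul_div_cancel₀ _ two_ne_zero]
  rw [versineQuotient, hcos, ← hsin]
  ring

/-- The kernel `(e^{hz} - 1 - hz) / h²` of Kolmogorov's representation of cumulant generating
functions, extended continuously by `z² / 2` at `h = 0`. -/
noncomputable def kolmogorovKernel (h : ℝ) (z : ℂ) : ℂ :=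
  if h = 0 then z ^ 2 / 2 else (exp (h * z) - 1 - h * z) / h ^ 2

lemma kolmogorovKernel_zero_left (z : ℂ) : kolmogorovKernel 0 z = z ^ 2 / 2 := if_pos rfl

lemma sq_mul_kolmogorovKernel (h : ℝ) (z : ℂ) :
    (h : ℂ) ^ 2 * kolmogorovKernel h z = exp (h * z) - 1 - h * z := by
  rcases eq_or_ne h 0 with rfl | hh
  · simp
  · rw [kolmogorovKernel, if_neg hh, mul_div_cancel₀ _ (by simpa using hh)]

lemma measurable_kolmogorovKernel_mul (l : ℝ) (z : ℂ) :
    Measurable fun x : ℝ ↦ kolmogorovKernel (l * x) z :=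
  Measurable.ite (measurableSet_eq_fun (by fun_prop) (by fun_prop)) (by fun_prop) (by fun_prop)

lemma norm_kolmogorovKernel_le (h : ℝ) (z : ℂ) :
    ‖kolmogorovKernel h z‖ ≤ ‖z‖ ^ 2 * (2 + Real.exp (h * z.re)) := by
  rcases eq_or_ne h 0 with rfl | hh
  · rw [kolmogorovKernel_zero_left, norm_div, norm_pow, Complex.norm_two, zero_mul, Real.exp_zero]
    linarith [sq_nonneg ‖z‖]
  · have hsq : 0 < h ^ 2 := by positivity
    have hnum := norm_cexp_sub_one_sub_id_le_sq_mul (h * z)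
    rw [← sq_mul_kolmogorovKernel, re_ofReal_mul, norm_mul, norm_mul, norm_pow, norm_real,
      Real.norm_eq_abs, mul_pow, sq_abs, mul_assoc] at hnum
    exact le_of_mul_le_mul_left hnum hsq

lemma re_kolmogorovKernel (h : ℝ) (z : ℂ) :
    (kolmogorovKernel h z).re =
      (kolmogorovKernel h z.re).re - Real.exp (h * z.re) * versineQuotient h z.im := by
  rcases eq_or_ne h 0 with rfl | hh
  · simp only [kolmogorovKernel_zero_left, versineQuotient, pow_two, div_ofNat_re, mul_re,
      ofReal_re, ofReal_im, zero_mul, zero_div, Real.exp_zero, Real.sinc_zero]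
    ring
  · have hsq : h ^ 2 ≠ 0 := pow_ne_zero 2 hh
    have hre (w : ℂ) : h ^ 2 * (kolmogorovKernel h w).re =
        Real.exp (h * w.re) * Real.cos (h * w.im) - 1 - h * w.re := by
      rw [← re_ofReal_mul, ofReal_pow, sq_mul_kolmogorovKernel]
      simp [exp_re]
    apply mul_left_cancel₀ hsq
    rw [mul_sub, mul_left_comm, sq_mul_versineQuotient, hre, hre]
    simp only [ofReal_re, ofReal_im, mul_zero, Real.cos_zero]
    ring

lemma mul_re_kolmogorovKernel_sub_le (h g : ℝ) (z : ℂ) :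
    (1 + g) * (kolmogorovKernel h z).re - g * (kolmogorovKernel h (z + 1)).re ≤
      (1 + g) * (kolmogorovKernel h z.re).re - g * (kolmogorovKernel h (z.re + 1)).re +
      (g ^ 2 + 1) * (Real.exp (h * z.re) + Real.exp (h * (z.re + 1))) := by
  set v := versineQuotient h z.im
  have hv : h ^ 2 * v ≤ 2 := by
    rw [sq_mul_versineQuotient]; linarith [Real.neg_one_le_cos (h * z.im)]
  have hstep : Real.exp (h * (z.re + 1)) = Real.exp (h * z.re) * Real.exp h := by
    rw [← Real.exp_add]; ring_nf
  have hdamp : v * (g * (Real.exp h - 1) - 1) ≤ (g ^ 2 + 1) * (1 + Real.exp h) :=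
    calc v * (g * (Real.exp h - 1) - 1)
        ≤ v * ((g ^ 2 + 1) / 2 * (h ^ 2 * (1 + Real.exp h))) := by
          gcongr
          · exact versineQuotient_nonneg _ _
          · exact mul_rexp_sub_one_sub_one_le g h
      _ = (g ^ 2 + 1) / 2 * (1 + Real.exp h) * (h ^ 2 * v) := by ring
      _ ≤ (g ^ 2 + 1) / 2 * (1 + Real.exp h) * 2 := by gcongr
      _ = (g ^ 2 + 1) * (1 + Real.exp h) := by ring
  have hz := re_kolmogorovKernel h z
  have hz1 := re_kolmogorovKernel h (z + 1)
  rw [add_re, one_re, add_im, one_im, add_zero, ofReal_add, ofReal_one, hstep] at hz1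
  rw [hz, hz1, hstep]
  linarith [mul_le_mul_of_nonneg_left hdamp (Real.exp_pos (h * z.re)).le]

lemma inv_one_add_abs_sq_le_re_kolmogorovKernel (h : ℝ) :
    ((1 + |h|) ^ 2)⁻¹ ≤ (kolmogorovKernel h 2).re - 2 * (kolmogorovKernel h 1).re := by
  rcases eq_or_ne h 0 with rfl | hh
  · norm_num [kolmogorovKernel_zero_left]
  · have hsq : 0 < h ^ 2 := by positivity
    have hkernel : h ^ 2 * ((kolmogorovKernel h 2).re - 2 * (kolmogorovKernel h 1).re) =
        (Real.exp h - 1) ^ 2 := by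
      have hre (s : ℝ) : h ^ 2 * (kolmogorovKernel h s).re = Real.exp (h * s) - 1 - h * s := by
        rw [← re_ofReal_mul, ofReal_pow, sq_mul_kolmogorovKernel]
        norm_cast
      have h1 := hre 1
      have h2 := hre 2
      rw [mul_two, Real.exp_add] at h2
      push_cast at h1 h2
      rw [mul_one] at h1
      linear_combination h2 - 2 * h1
    have hexp := pow_le_pow_left₀ (abs_nonneg h) (abs_le_one_add_abs_mul_abs_rexp_sub_one h) 2
    rw [mul_pow, sq_abs, sq_abs, ← hkernel, mul_left_comm] at hexp
    rw [inv_le_iff_one_le_mul₀' (by positivity)]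
    exact le_of_mul_le_mul_left (by rwa [mul_one]) hsq

end KolmogorovKernel

section KolmogorovIntegral

/-- The integral part of Kolmogorov's representation `κ(λ, z) = μ z + ∫ (e^{hz} - 1 - hz) / h² dν`,
`h = λ x`, of a cumulant generating function. -/
noncomputable def kolmogorovIntegral (ν : Measure ℝ) (lam : ℝ) (z : ℂ) : ℂ :=
  ∫ x, kolmogorovKernel (lam * x) z ∂ν

variable {ν : Measure ℝ} [IsFiniteMeasure ν] {lam : ℝ} {z w : ℂ}

lemma norm_kolmogorovKernel_mul_le (hlam : lam ∈ Icc (0 : ℝ) 1) (z : ℂ) (x : ℝ) :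
    ‖kolmogorovKernel (lam * x) z‖ ≤ ‖z‖ ^ 2 * (3 + Real.exp (z.re * x)) := by
  refine (norm_kolmogorovKernel_le _ z).trans ?_
  gcongr ‖z‖ ^ 2 * ?_
  rw [mul_assoc, mul_comm x]
  linarith [rexp_mul_le_one_add_rexp hlam (z.re * x)]

lemma integrable_kolmogorovKernel (hlam : lam ∈ Icc (0 : ℝ) 1)
    (hz : z.re ∈ integrableExpSet id ν) :
    Integrable (fun x ↦ kolmogorovKernel (lam * x) z) ν :=
  Integrable.mono' (((integrable_const 3).add hz).const_mul (‖z‖ ^ 2))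
    (measurable_kolmogorovKernel_mul lam z).aestronglyMeasurable
    (.of_forall (norm_kolmogorovKernel_mul_le hlam z))

lemma integral_const_add_rexp {s : ℝ} (hs : s ∈ integrableExpSet id ν) (C : ℝ) :
    ∫ x, (C + Real.exp (s * id x)) ∂ν = C * ν.real univ + mgf id ν s := by
  rw [integral_add (integrable_const C) hs, integral_const, smul_eq_mul, mul_comm C]
  rfl

lemma norm_kolmogorovIntegral_le (hlam : lam ∈ Icc (0 : ℝ) 1)
    (hz : z.re ∈ integrableExpSet id ν) :
    ‖kolmogorovIntegral ν lam z‖ ≤ ‖z‖ ^ 2 * (3 * ν.real univ + mgf id ν z.re) :=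
  calc ‖kolmogorovIntegral ν lam z‖ ≤ ∫ x, ‖z‖ ^ 2 * (3 + Real.exp (z.re * id x)) ∂ν :=
        norm_integral_le_of_norm_le (((integrable_const 3).add hz).const_mul (‖z‖ ^ 2))
          (.of_forall (norm_kolmogorovKernel_mul_le hlam z))
    _ = ‖z‖ ^ 2 * (3 * ν.real univ + mgf id ν z.re) := by
        rw [integral_const_mul, integral_const_add_rexp hz]

lemma integrable_mul_re_kolmogorovKernel_sub (hlam : lam ∈ Icc (0 : ℝ) 1)
    (hz : z.re ∈ integrableExpSet id ν) (hw : w.re ∈ integrableExpSet id ν) (a b : ℝ) :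
    Integrable (fun x ↦ a * (kolmogorovKernel (lam * x) z).re -
      b * (kolmogorovKernel (lam * x) w).re) ν :=
  ((integrable_kolmogorovKernel hlam hz).re.const_mul a).sub
    ((integrable_kolmogorovKernel hlam hw).re.const_mul b)

lemma mul_re_kolmogorovIntegral_sub (hlam : lam ∈ Icc (0 : ℝ) 1)
    (hz : z.re ∈ integrableExpSet id ν) (hw : w.re ∈ integrableExpSet id ν) (a b : ℝ) :
    a * (kolmogorovIntegral ν lam z).re - b * (kolmogorovIntegral ν lam w).re =
      ∫ x, (a * (kolmogorovKernel (lam * x) z).re - b * (kolmogorovKernel (lam * x) w).re) ∂ν := by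
  have hiz := integrable_kolmogorovKernel hlam hz
  have hiw := integrable_kolmogorovKernel hlam hw
  have hre := integral_sub (hiz.re.const_mul a) (hiw.re.const_mul b)
  rw [integral_const_mul, integral_const_mul, integral_re hiz, integral_re hiw] at hre
  exact hre.symm

lemma mul_re_kolmogorovIntegral_sub_le (hlam : lam ∈ Icc (0 : ℝ) 1)
    (hz : z.re ∈ integrableExpSet id ν) (hz1 : z.re + 1 ∈ integrableExpSet id ν) (g : ℝ) :
    (1 + g) * (kolmogorovIntegral ν lam z).re - g * (kolmogorovIntegral ν lam (z + 1)).re ≤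
      (1 + g) * (kolmogorovIntegral ν lam z.re).re -
        g * (kolmogorovIntegral ν lam (z.re + 1)).re +
      (g ^ 2 + 1) * (2 * ν.real univ + mgf id ν z.re + mgf id ν (z.re + 1)) := by
  have hexp (s : ℝ) (hs : s ∈ integrableExpSet id ν) :
      Integrable (fun x ↦ 1 + Real.exp (s * id x)) ν := (integrable_const 1).add hs
  have hdom : Integrable (fun x ↦ 1 + Real.exp (z.re * id x) +
      (1 + Real.exp ((z.re + 1) * id x))) ν := (hexp _ hz).add (hexp _ hz1)
  have hmgf : 2 * ν.real univ + mgf id ν z.re + mgf id ν (z.re + 1) =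
      ∫ x, (1 + Real.exp (z.re * id x) + (1 + Real.exp ((z.re + 1) * id x))) ∂ν := by
    rw [integral_add (hexp _ hz) (hexp _ hz1), integral_const_add_rexp hz,
      integral_const_add_rexp hz1]
    ring
  have hz1' : (z + 1).re ∈ integrableExpSet id ν := by simpa using hz1
  have hre : (z.re : ℂ).re ∈ integrableExpSet id ν := by simpa using hz
  have hre1 : (z.re + 1 : ℂ).re ∈ integrableExpSet id ν := by simpa using hz1
  rw [mul_re_kolmogorovIntegral_sub hlam hz hz1', mul_re_kolmogorovIntegral_sub hlam hre hre1,
    hmgf, ← integral_const_mul,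
    ← integral_add (integrable_mul_re_kolmogorovKernel_sub hlam hre hre1 _ _) (hdom.const_mul _)]
  refine integral_mono (integrable_mul_re_kolmogorovKernel_sub hlam hz hz1' _ _)
    ((integrable_mul_re_kolmogorovKernel_sub hlam hre hre1 _ _).add (hdom.const_mul _)) fun x ↦ ?_
  refine (mul_re_kolmogorovKernel_sub_le (lam * x) g z).trans ?_
  have hbound (s : ℝ) : Real.exp (lam * x * s) ≤ 1 + Real.exp (s * id x) := by
    rw [mul_assoc, mul_comm x]
    exact rexp_mul_le_one_add_rexp hlam _
  gcongr <;> exact hbound _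

lemma integrable_inv_one_add_abs_sq : Integrable (fun x : ℝ ↦ ((1 + |x|) ^ 2)⁻¹) ν := by
  refine (integrable_const 1).mono' (by fun_prop) (.of_forall fun x ↦ ?_)
  rw [Real.norm_of_nonneg (by positivity)]
  exact inv_le_one_of_one_le₀ (one_le_pow₀ (by linarith [abs_nonneg x]))

lemma integral_inv_one_add_abs_sq_pos [NeZero ν] : 0 < ∫ x : ℝ, ((1 + |x|) ^ 2)⁻¹ ∂ν := by
  have hpos (x : ℝ) : 0 < ((1 + |x|) ^ 2)⁻¹ := by positivity
  rw [integral_pos_iff_support_of_nonneg (fun x ↦ (hpos x).le) integrable_inv_one_add_abs_sq,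
    Function.support_eq_univ fun x ↦ (hpos x).ne']
  exact Measure.measure_univ_pos.2 (NeZero.ne ν)

lemma integral_inv_one_add_abs_sq_le (hlam : lam ∈ Icc (0 : ℝ) 1)
    (h1 : 1 ∈ integrableExpSet id ν) (h2 : 2 ∈ integrableExpSet id ν) :
    ∫ x : ℝ, ((1 + |x|) ^ 2)⁻¹ ∂ν ≤
      (kolmogorovIntegral ν lam 2).re - 2 * (kolmogorovIntegral ν lam 1).re := by
  have h1' : (1 : ℂ).re ∈ integrableExpSet id ν := by simpa using h1
  have h2' : (2 : ℂ).re ∈ integrableExpSet id ν := by simpa using h2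
  rw [← one_mul (kolmogorovIntegral ν lam 2).re, mul_re_kolmogorovIntegral_sub hlam h2' h1']
  refine integral_mono integrable_inv_one_add_abs_sq
    (integrable_mul_re_kolmogorovKernel_sub hlam h2' h1' _ _) fun x ↦ ?_
  rw [one_mul]
  refine le_trans ?_ (inv_one_add_abs_sq_le_re_kolmogorovKernel (lam * x))
  have habs : |lam * x| ≤ |x| := by
    rw [abs_mul, abs_of_nonneg hlam.1]
    exact mul_le_of_le_one_left (abs_nonneg x) hlam.2
  gcongr

end KolmogorovIntegral

section KolmogorovMeasure

/-- Kolmogorov's measure `c δ₀ + x² K(dx)` of an infinitely divisible law with Gaussian variance `c`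
and Lévy measure `K`. -/
noncomputable def kolmogorovMeasure (c : ℝ) (K : Measure ℝ) : Measure ℝ :=
  ENNReal.ofReal c • Measure.dirac 0 + K.withDensity fun x ↦ ENNReal.ofReal (x ^ 2)

variable {c : ℝ} {K : Measure ℝ} {E : Type*} [NormedAddCommGroup E] [NormedSpace ℝ E] {f : ℝ → E}

lemma integrable_kolmogorovMeasure_iff :
    Integrable f (kolmogorovMeasure c K) ↔ Integrable (fun x ↦ x ^ 2 • f x) K := by
  have hdirac : Integrable f (ENNReal.ofReal c • Measure.dirac 0) :=
    (integrable_dirac enorm_lt_top).smul_measure ENNReal.ofReal_ne_top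
  rw [kolmogorovMeasure, integrable_add_measure, and_iff_right hdirac,
    integrable_withDensity_iff_integrable_smul' (by fun_prop) (by simp)]
  simp only [ENNReal.toReal_ofReal (sq_nonneg _)]

lemma integral_kolmogorovMeasure [CompleteSpace E] (hc : 0 ≤ c)
    (hf : Integrable f (kolmogorovMeasure c K)) :
    ∫ x, f x ∂(kolmogorovMeasure c K) = c • f 0 + ∫ x, x ^ 2 • f x ∂K := by
  rw [kolmogorovMeasure, integrable_add_measure] at hf
  rw [kolmogorovMeasure, integral_add_measure hf.1 hf.2, integral_smul_measure, integral_dirac,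
    ENNReal.toReal_ofReal hc,
    integral_withDensity_eq_integral_toReal_smul (by fun_prop) (by simp)]
  simp only [ENNReal.toReal_ofReal (sq_nonneg _)]

lemma mem_integrableExpSet_kolmogorovMeasure_iff {s : ℝ} :
    s ∈ integrableExpSet id (kolmogorovMeasure c K) ↔
      Integrable (fun x ↦ x ^ 2 * Real.exp (s * x)) K :=
  integrable_kolmogorovMeasure_iff

lemma isFiniteMeasure_kolmogorovMeasure (hK : Integrable (fun x ↦ x ^ 2) K) :
    IsFiniteMeasure (kolmogorovMeasure c K) := by
  have hone : Integrable (fun _ ↦ (1 : ℝ)) (kolmogorovMeasure c K) :=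
    integrable_kolmogorovMeasure_iff.2 (by simpa using hK)
  simpa [integrable_const_iff] using hone

lemma neZero_kolmogorovMeasure (hc : 0 ≤ c) (hσ : 0 < c + ∫ x, x ^ 2 ∂K) :
    NeZero (kolmogorovMeasure c K) := by
  refine ⟨fun hzero ↦ hσ.ne' ?_⟩
  have hmass := integral_kolmogorovMeasure (f := fun _ ↦ (1 : ℝ)) hc
    (by rw [hzero]; exact integrable_zero_measure)
  simpa [hzero] using hmass.symm

end KolmogorovMeasure

section CumulantGeneratingFunction

lemma kappa_conj (μ c : ℝ) (K : Measure ℝ) (lam : ℝ) (z : ℂ) :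
    kappa μ c K lam (starRingEnd ℂ z) = starRingEnd ℂ (kappa μ c K lam z) := by
  have htwo : starRingEnd ℂ 2 = 2 := map_ofNat _ 2
  unfold kappa
  split_ifs
  · simp [htwo]
  · simp [htwo, ← integral_conj, ← exp_conj]

lemma ofReal_re_kappa_ofReal (μ c : ℝ) (K : Measure ℝ) (lam s : ℝ) :
    ((kappa μ c K lam s).re : ℂ) = kappa μ c K lam s := by
  rw [← conj_eq_iff_re, ← kappa_conj, conj_ofReal]

variable {μ c : ℝ} {K : Measure ℝ} {lam : ℝ} {z : ℂ}

lemma kappa_eq_add_kolmogorovIntegral (hc : 0 ≤ c)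
    [IsFiniteMeasure (kolmogorovMeasure c K)] (hlam : lam ∈ Icc (0 : ℝ) 1)
    (hz : z.re ∈ integrableExpSet id (kolmogorovMeasure c K)) :
    kappa μ c K lam z = μ * z + kolmogorovIntegral (kolmogorovMeasure c K) lam z := by
  rw [kolmogorovIntegral, integral_kolmogorovMeasure hc (integrable_kolmogorovKernel hlam hz),
    mul_zero, kolmogorovKernel_zero_left, kappa]
  rcases eq_or_ne lam 0 with rfl | hl
  · have hint : ∫ x : ℝ, x ^ 2 • kolmogorovKernel (0 * x) z ∂K =
        (∫ x : ℝ, x ^ 2 ∂K : ℝ) * (z ^ 2 / 2) := by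
      simp only [zero_mul, kolmogorovKernel_zero_left]
      rw [integral_smul_const, real_smul]
    rw [if_pos rfl, hint, real_smul]
    push_cast
    ring
  · have hkernel (x : ℝ) : x ^ 2 • kolmogorovKernel (lam * x) z =
        ((lam : ℂ) ^ 2)⁻¹ * (exp (lam * z * x) - 1 - lam * z * x) := by
      have hsq := sq_mul_kolmogorovKernel (lam * x) z
      rw [ofReal_mul, mul_right_comm, mul_pow, mul_assoc] at hsq
      rw [← hsq, inv_mul_cancel_left₀ (by simpa using hl), real_smul, ofReal_pow]
    simp only [if_neg hl, hkernel, integral_const_mul, real_smul]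
    ring

lemma norm_kappa_le (hc : 0 ≤ c) [IsFiniteMeasure (kolmogorovMeasure c K)]
    (hlam : lam ∈ Icc (0 : ℝ) 1) (hz : z.re ∈ integrableExpSet id (kolmogorovMeasure c K)) :
    ‖kappa μ c K lam z‖ ≤ |μ| * ‖z‖ + ‖z‖ ^ 2 * (3 * (kolmogorovMeasure c K).real univ +
      mgf id (kolmogorovMeasure c K) z.re) := by
  rw [kappa_eq_add_kolmogorovIntegral hc hlam hz, ← Real.norm_eq_abs, ← norm_real, ← norm_mul]
  exact (norm_add_le _ _).trans (add_le_add_right (norm_kolmogorovIntegral_le hlam hz) _)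

lemma mul_re_kappa_sub_le (hc : 0 ≤ c) [IsFiniteMeasure (kolmogorovMeasure c K)]
    (hlam : lam ∈ Icc (0 : ℝ) 1) (hz : z.re ∈ integrableExpSet id (kolmogorovMeasure c K))
    (hz1 : z.re + 1 ∈ integrableExpSet id (kolmogorovMeasure c K)) (g : ℝ) :
    (1 + g) * (kappa μ c K lam z).re - g * (kappa μ c K lam (z + 1)).re ≤
      (1 + g) * (kappa μ c K lam z.re).re - g * (kappa μ c K lam (z.re + 1)).re +
      (g ^ 2 + 1) * (2 * (kolmogorovMeasure c K).real univ +
        mgf id (kolmogorovMeasure c K) z.re + mgf id (kolmogorovMeasure c K) (z.re + 1)) := by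
  have hkappa (w : ℂ) (hw : w.re ∈ integrableExpSet id (kolmogorovMeasure c K)) :
      (kappa μ c K lam w).re =
        μ * w.re + (kolmogorovIntegral (kolmogorovMeasure c K) lam w).re := by
    rw [kappa_eq_add_kolmogorovIntegral hc hlam hw, add_re, re_ofReal_mul]
  rw [hkappa z hz, hkappa (z + 1) (by simpa using hz1), hkappa z.re (by simpa using hz),
    hkappa (z.re + 1) (by simpa using hz1)]
  simp only [add_re, one_re, ofReal_re]
  linarith [mul_re_kolmogorovIntegral_sub_le hlam hz hz1 g]

lemma kbar_one_one (μ c : ℝ) (K : Measure ℝ) (lam : ℝ) :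
    kbar μ c K lam 1 1 = kappa μ c K lam 2 - 2 * kappa μ c K lam 1 := by
  rw [kbar, one_add_one_eq_two]
  ring

lemma integral_inv_one_add_abs_sq_le_re_kbar (hc : 0 ≤ c)
    [IsFiniteMeasure (kolmogorovMeasure c K)] (hlam : lam ∈ Icc (0 : ℝ) 1)
    (h1 : 1 ∈ integrableExpSet id (kolmogorovMeasure c K))
    (h2 : 2 ∈ integrableExpSet id (kolmogorovMeasure c K)) :
    ∫ x : ℝ, ((1 + |x|) ^ 2)⁻¹ ∂(kolmogorovMeasure c K) ≤ (kbar μ c K lam 1 1).re := by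
  refine (integral_inv_one_add_abs_sq_le hlam h1 h2).trans_eq ?_
  rw [kbar_one_one, kappa_eq_add_kolmogorovIntegral hc hlam (by simpa using h2),
    kappa_eq_add_kolmogorovIntegral hc hlam (by simpa using h1)]
  simp only [sub_re, add_re, mul_re, ofReal_re, ofReal_im, re_ofNat, im_ofNat, one_re, one_im]
  ring

end CumulantGeneratingFunction

section Eta

/-- The real number `g = κ(λ, 1) / κ̄(λ; 1, 1)` with `η(λ, z) = κ(λ, z) - g κ̄(λ; z, 1)`. -/
noncomputable def kappaRatio (μ c : ℝ) (K : Measure ℝ) (lam : ℝ) : ℝ :=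
  (kappa μ c K lam 1).re / (kbar μ c K lam 1 1).re

lemma etaLK_eq_kappa_sub_kappaRatio_mul (μ c : ℝ) (K : Measure ℝ) (lam : ℝ) (z : ℂ) :
    etaLK μ c K lam z = kappa μ c K lam z - kappaRatio μ c K lam * kbar μ c K lam z 1 := by
  have h1 : ((kappa μ c K lam 1).re : ℂ) = kappa μ c K lam 1 := by
    simpa using ofReal_re_kappa_ofReal μ c K lam 1
  have h2 : ((kappa μ c K lam 2).re : ℂ) = kappa μ c K lam 2 := by
    simpa using ofReal_re_kappa_ofReal μ c K lam 2
  have hbar : ((kbar μ c K lam 1 1).re : ℂ) = kbar μ c K lam 1 1 := by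
    rw [kbar_one_one, ← h1, ← h2]
    norm_cast
  rw [etaLK, gamLK, kappaRatio, ofReal_div, h1, hbar]
  ring

lemma re_etaLK (μ c : ℝ) (K : Measure ℝ) (lam : ℝ) (z : ℂ) :
    (etaLK μ c K lam z).re = (1 + kappaRatio μ c K lam) * (kappa μ c K lam z).re -
      kappaRatio μ c K lam * (kappa μ c K lam (z + 1)).re +
      kappaRatio μ c K lam * (kappa μ c K lam 1).re := by
  rw [etaLK_eq_kappa_sub_kappaRatio_mul, sub_re, re_ofReal_mul, kbar, sub_re, sub_re]
  ring

variable {μ c : ℝ} {K : Measure ℝ} [IsFiniteMeasure (kolmogorovMeasure c K)]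

lemma re_etaLK_le_re_etaLK_ofReal_re_add (hc : 0 ≤ c) {lam : ℝ} (hlam : lam ∈ Icc (0 : ℝ) 1)
    {z : ℂ}
    (hz : z.re ∈ integrableExpSet id (kolmogorovMeasure c K))
    (hz1 : z.re + 1 ∈ integrableExpSet id (kolmogorovMeasure c K)) :
    (etaLK μ c K lam z).re ≤ (etaLK μ c K lam z.re).re + (kappaRatio μ c K lam ^ 2 + 1) *
      (2 * (kolmogorovMeasure c K).real univ + mgf id (kolmogorovMeasure c K) z.re +
        mgf id (kolmogorovMeasure c K) (z.re + 1)) := by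
  rw [re_etaLK, re_etaLK]
  linarith [mul_re_kappa_sub_le (μ := μ) hc hlam hz hz1 (kappaRatio μ c K lam)]

lemma exists_norm_kappa_le (hc : 0 ≤ c) {z : ℂ}
    (hz : z.re ∈ integrableExpSet id (kolmogorovMeasure c K)) :
    ∃ B, ∀ lam ∈ Icc (0 : ℝ) 1, ‖kappa μ c K lam z‖ ≤ B :=
  ⟨_, fun _ hlam ↦ norm_kappa_le hc hlam hz⟩

lemma exists_abs_kappaRatio_le [NeZero (kolmogorovMeasure c K)] (hc : 0 ≤ c)
    (h1 : 1 ∈ integrableExpSet id (kolmogorovMeasure c K))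
    (h2 : 2 ∈ integrableExpSet id (kolmogorovMeasure c K)) :
    ∃ A, ∀ lam ∈ Icc (0 : ℝ) 1, |kappaRatio μ c K lam| ≤ A := by
  obtain ⟨B, hB⟩ := exists_norm_kappa_le (μ := μ) (z := 1) hc (by simpa using h1)
  have hpos := integral_inv_one_add_abs_sq_pos (ν := kolmogorovMeasure c K)
  refine ⟨B / ∫ x : ℝ, ((1 + |x|) ^ 2)⁻¹ ∂(kolmogorovMeasure c K), fun lam hlam ↦ ?_⟩
  have hbar := integral_inv_one_add_abs_sq_le_re_kbar (μ := μ) hc hlam h1 h2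
  rw [kappaRatio, abs_div, abs_of_pos (hpos.trans_le hbar)]
  exact div_le_div₀ ((norm_nonneg _).trans (hB lam hlam))
    ((abs_re_le_norm _).trans (hB lam hlam)) hpos hbar

lemma exists_re_etaLK_le [NeZero (kolmogorovMeasure c K)] (hc : 0 ≤ c) {z : ℂ}
    (h1 : 1 ∈ integrableExpSet id (kolmogorovMeasure c K))
    (h2 : 2 ∈ integrableExpSet id (kolmogorovMeasure c K))
    (hz : z.re ∈ integrableExpSet id (kolmogorovMeasure c K))
    (hz1 : z.re + 1 ∈ integrableExpSet id (kolmogorovMeasure c K)) :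
    ∃ B, ∀ lam ∈ Icc (0 : ℝ) 1, (etaLK μ c K lam z).re ≤ B := by
  obtain ⟨A, hA⟩ := exists_abs_kappaRatio_le (μ := μ) hc h1 h2
  obtain ⟨B₁, hB₁⟩ := exists_norm_kappa_le (μ := μ) (z := 1) hc (by simpa using h1)
  obtain ⟨B, hB⟩ := exists_norm_kappa_le (μ := μ) hc hz
  obtain ⟨B', hB'⟩ := exists_norm_kappa_le (μ := μ) (z := z + 1) hc (by simpa using hz1)
  refine ⟨B + A * (B' + B + B₁), fun lam hlam ↦ (re_le_norm _).trans ?_⟩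
  have hbar : ‖kbar μ c K lam z 1‖ ≤ B' + B + B₁ :=
    norm_sub_le_of_le (norm_sub_le_of_le (hB' lam hlam) (hB lam hlam)) (hB₁ lam hlam)
  rw [etaLK_eq_kappa_sub_kappaRatio_mul]
  refine norm_sub_le_of_le (hB lam hlam) ?_
  rw [norm_mul, norm_real]
  exact mul_le_mul (hA lam hlam) hbar (norm_nonneg _) ((abs_nonneg _).trans (hA lam hlam))

lemma exists_re_etaLK_le_of_re_eq [NeZero (kolmogorovMeasure c K)] (hc : 0 ≤ c) {R : ℝ}
    (h1 : 1 ∈ integrableExpSet id (kolmogorovMeasure c K))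
    (h2 : 2 ∈ integrableExpSet id (kolmogorovMeasure c K))
    (hR : R ∈ integrableExpSet id (kolmogorovMeasure c K))
    (hR1 : R + 1 ∈ integrableExpSet id (kolmogorovMeasure c K)) :
    ∃ B, ∀ lam ∈ Icc (0 : ℝ) 1, ∀ z : ℂ, z.re = R → (etaLK μ c K lam z).re ≤ B := by
  obtain ⟨A, hA⟩ := exists_abs_kappaRatio_le (μ := μ) hc h1 h2
  obtain ⟨B, hB⟩ := exists_re_etaLK_le (μ := μ) (z := R) hc h1 h2 hR hR1
  refine ⟨B + (A ^ 2 + 1) * (2 * (kolmogorovMeasure c K).real univ +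
    mgf id (kolmogorovMeasure c K) R + mgf id (kolmogorovMeasure c K) (R + 1)), ?_⟩
  rintro lam hlam z rfl
  refine (re_etaLK_le_re_etaLK_ofReal_re_add hc hlam hR hR1).trans ?_
  have hmgf (s : ℝ) : 0 ≤ mgf id (kolmogorovMeasure c K) s := mgf_nonneg
  have hsq : kappaRatio μ c K lam ^ 2 ≤ A ^ 2 := sq_le_sq' (abs_le.1 (hA lam hlam)).1
    (abs_le.1 (hA lam hlam)).2
  gcongr
  · exact hB lam hlam
  · linarith [hmgf z.re, hmgf (z.re + 1),
      measureReal_nonneg (μ := kolmogorovMeasure c K) (s := univ)]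

end Eta

section LevyMeasure

variable {K : Measure ℝ}

lemma integrable_sq_mul_rexp {s : ℝ} (hmin : Integrable (fun x : ℝ ↦ min 1 (x ^ 2)) K)
    (hs : s ∈ interior (integrableExpSet id (K.restrict {x | 1 ≤ |x|}))) :
    Integrable (fun x : ℝ ↦ x ^ 2 * Real.exp (s * x)) K := by
  have hmeas : MeasurableSet {x : ℝ | 1 ≤ |x|} := measurableSet_le (by fun_prop) (by fun_prop)
  have hlarge : IntegrableOn (fun x : ℝ ↦ x ^ 2 * Real.exp (s * x)) {x | 1 ≤ |x|} K :=
    integrable_pow_mul_exp_of_mem_interior_integrableExpSet hs 2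
  have hsmall : IntegrableOn (fun x : ℝ ↦ x ^ 2 * Real.exp (s * x)) {x | 1 ≤ |x|}ᶜ K := by
    refine (hmin.integrableOn.mul_const (Real.exp |s|)).mono' (by fun_prop)
      (ae_restrict_of_forall_mem hmeas.compl fun x hx ↦ ?_)
    have hx1 : |x| ≤ 1 := (not_le.1 (show ¬ 1 ≤ |x| from hx)).le
    have hsx : s * x ≤ |s| := (le_abs_self _).trans
      (by rw [abs_mul]; exact mul_le_of_le_one_right (abs_nonneg s) hx1)
    rw [Real.norm_of_nonneg (by positivity), min_eq_right (sq_le_one_iff_abs_le_one x |>.2 hx1)]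
    gcongr
  exact integrableOn_univ.1 (union_compl_self {x : ℝ | 1 ≤ |x|} ▸ hlarge.union hsmall)

lemma integrable_sq_mul_rexp_of_mem_Ioo {a b s : ℝ}
    (hKmin : ∫⁻ x : ℝ, ENNReal.ofReal (min 1 (x ^ 2)) ∂K ≠ ⊤)
    (hKexp : ∀ t ∈ Ioo a b,
      ∫⁻ x in {x : ℝ | 1 ≤ |x|}, ENNReal.ofReal (Real.exp (t * x)) ∂K ≠ ⊤)
    (hs : s ∈ Ioo a b) : Integrable (fun x : ℝ ↦ x ^ 2 * Real.exp (s * x)) K := by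
  refine integrable_sq_mul_rexp ?_ (interior_maximal (fun t ht ↦ ?_) isOpen_Ioo hs)
  · exact (lintegral_ofReal_ne_top_iff_integrable (by fun_prop)
      (.of_forall fun x ↦ by positivity)).1 hKmin
  · exact (lintegral_ofReal_ne_top_iff_integrable (by fun_prop)
      (.of_forall fun x ↦ (Real.exp_pos _).le)).1 (hKexp t ht)

end LevyMeasure

theorem exp_re_eta_bounded_general (μ : ℝ) {c : ℝ} (hc : 0 ≤ c) {K : Measure ℝ} (R : ℝ)
    (hK : ∀ s ∈ ({0, 2, R, R + 1} : Set ℝ), Integrable (fun x ↦ x ^ 2 * Real.exp (s * x)) K)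
    (hσ : 0 < c + ∫ x, x ^ 2 ∂K) :
    ∃ M : ℝ, ∀ lam ∈ Icc (0 : ℝ) 1, ∀ z : ℂ, z.re = R →
      Real.exp ((etaLK μ c K lam z).re) ≤ M := by
  have hexp (s : ℝ) (hs : s ∈ ({0, 2, R, R + 1} : Set ℝ)) :
      s ∈ integrableExpSet id (kolmogorovMeasure c K) :=
    mem_integrableExpSet_kolmogorovMeasure_iff.2 (hK s hs)
  have hexp_one : 1 ∈ integrableExpSet id (kolmogorovMeasure c K) :=
    convex_integrableExpSet.ordConnected.out (hexp 0 (by simp)) (hexp 2 (by simp)) (by norm_num)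
  have := isFiniteMeasure_kolmogorovMeasure (c := c) (by simpa using hK 0 (by simp))
  have := neZero_kolmogorovMeasure hc hσ
  obtain ⟨B, hB⟩ := exists_re_etaLK_le_of_re_eq (μ := μ) hc hexp_one (hexp 2 (by simp))
    (hexp R (by simp)) (hexp (R + 1) (by simp))
  exact ⟨Real.exp B, fun lam hlam z hz ↦ Real.exp_le_exp.2 (hB lam hlam z hz)⟩

/-- uniform boundedness of `e^{Re η(λ,z)}` on `[0,1] × {Re z = R}`
(Lemma `expReKappaReEta`, part 2). -/
theorem exp_re_eta_bounded
    (μ c : ℝ) (hc : 0 ≤ c) (K : MeasureTheory.Measure ℝ)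
    (hK0 : K {0} = 0)
    (hKmin : ∫⁻ x : ℝ, ENNReal.ofReal (min 1 (x ^ 2)) ∂K ≠ ⊤)
    (R : ℝ) (hR : R ≠ 0) (a b : ℝ)
    (h0 : (0 : ℝ) ∈ Set.Ioo a b) (h2 : (2 : ℝ) ∈ Set.Ioo a b)
    (h2R : 2 * R ∈ Set.Ioo a b)
    (hK5 : ∫⁻ x in {x : ℝ | 1 ≤ |x|}, ENNReal.ofReal (|x| ^ 5) ∂K ≠ ⊤)
    (hKexp : ∀ s ∈ Set.Ioo a b,
      ∫⁻ x in {x : ℝ | 1 ≤ |x|}, ENNReal.ofReal (Real.exp (s * x)) ∂K ≠ ⊤)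
    (σ2 : ℝ) (hσ2 : σ2 = c + ∫ x : ℝ, x ^ 2 ∂K) (hσ2pos : 0 < σ2)
    :
    ∃ M : ℝ, ∀ lam ∈ Set.Icc (0 : ℝ) 1, ∀ z : ℂ, z.re = R →
      Real.exp ((etaLK μ c K lam z).re) ≤ M := by
  refine exp_re_eta_bounded_general μ hc R (fun s hs ↦ ?_) (hσ2 ▸ hσ2pos)
  exact integrable_sq_mul_rexp_of_mem_Ioo hKmin hKexp
    (by rcases hs with rfl | rfl | rfl | rfl <;> constructor <;>
        linarith [h0.1, h0.2, h2.1, h2.2, h2R.1, h2R.2])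
end

section
/- With the Lévy–Khintchine data (μ, c, K) and κ as defined, suppose (ν_λ)_{λ∈(0,1]} is a family of Borel probability measures on ℝ such that for each λ ∈ (0,1] the characteristic function of ν_λ is u ↦ exp(κ(λ, iu)). Then, as λ → 0, ν_λ converges weakly to the Gaussian measure on ℝ with mean μ and variance σ². -/
open MeasureTheory ProbabilityTheory Complex Set Filter
open scoped Topology

/-! By Lévy's continuity theorem it is enough that `κ(λ, iu) → κ(0, iu)` as `λ → 0`, since
`exp (κ(0, iu))` is the Gaussian characteristic function. For each `x`, the compensated exponential
`λ⁻² (exp (λiux) - 1 - λiux)` tends to `(iux)² / 2`. As `λiux` is purely imaginary, it is bounded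
by `3u²x²` uniformly in `λ`, and `x²` is `K`-integrable, so dominated convergence applies. -/

lemma norm_exp_sub_one_sub_id_le_of_re_nonpos {z : ℂ} (hz : z.re ≤ 0) :
    ‖exp z - 1 - z‖ ≤ 3 * ‖z‖ ^ 2 := by
  rcases le_total ‖z‖ 1 with hz1 | hz1
  · linarith [norm_exp_sub_one_sub_id_le hz1, sq_nonneg ‖z‖]
  · have hexp : ‖exp z‖ ≤ 1 := by rwa [norm_exp, Real.exp_le_one_iff]
    calc ‖exp z - 1 - z‖ ≤ ‖exp z‖ + ‖(1 : ℂ)‖ + ‖z‖ :=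
          (norm_sub_le _ _).trans (by gcongr; exact norm_sub_le _ _)
      _ ≤ 3 * ‖z‖ := by rw [norm_one]; linarith
      _ ≤ 3 * ‖z‖ ^ 2 := by gcongr; exact le_self_pow₀ hz1 two_ne_zero

lemma tendsto_inv_sq_mul_exp_mul_sub_one_sub (w : ℂ) :
    Tendsto (fun t : ℂ ↦ (t ^ 2)⁻¹ * (exp (t * w) - 1 - t * w)) (𝓝[≠] 0) (𝓝 (w ^ 2 / 2)) := by
  have hw : Tendsto (fun t : ℂ ↦ t * w) (𝓝 0) (𝓝 0) :=
    Continuous.tendsto' (by fun_prop) _ _ (zero_mul w)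
  have hsq : (fun t : ℂ ↦ (t * w) ^ 2) =O[𝓝 0] fun t ↦ t ^ 2 := by
    simpa only [mul_pow, mul_comm] using
      (Asymptotics.isBigO_refl (fun t : ℂ ↦ t ^ 2) (𝓝 0)).const_mul_left (w ^ 2)
  have hrem : (fun t : ℂ ↦ exp (t * w) - ∑ i ∈ Finset.range 3, (t * w) ^ i / i.factorial)
      =o[𝓝 0] fun t ↦ t ^ 2 :=
    ((exp_sub_sum_range_succ_isLittleO_pow 2).comp_tendsto hw).trans_isBigO hsq
  have hlim := (hrem.tendsto_div_nhds_zero.mono_left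
    (nhdsWithin_le_nhds (s := {0}ᶜ))).add_const (w ^ 2 / 2)
  refine (zero_add (w ^ 2 / 2) ▸ hlim).congr' ?_
  filter_upwards [self_mem_nhdsWithin] with t (ht : t ≠ 0)
  simp only [Finset.sum_range_succ, Finset.sum_range_zero, Nat.factorial]
  field_simp
  push_cast
  ring

lemma integrable_sq_of_lintegral_min_of_lintegral_abs_pow {K : Measure ℝ} {n : ℕ} (hn : 2 ≤ n)
    (hmin : ∫⁻ x : ℝ, ENNReal.ofReal (min 1 (x ^ 2)) ∂K ≠ ⊤)
    (htail : ∫⁻ x in {x : ℝ | 1 ≤ |x|}, ENNReal.ofReal (|x| ^ n) ∂K ≠ ⊤) :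
    Integrable (fun x : ℝ ↦ x ^ 2) K := by
  have hmeas : MeasurableSet {x : ℝ | 1 ≤ |x|} := measurableSet_le (by fun_prop) (by fun_prop)
  have hmin_int : Integrable (fun x : ℝ ↦ min 1 (x ^ 2)) K :=
    (lintegral_ofReal_ne_top_iff_integrable (by fun_prop) (.of_forall fun x ↦ by positivity)).1 hmin
  have htail_int : IntegrableOn (fun x : ℝ ↦ |x| ^ n) {x | 1 ≤ |x|} K :=
    (lintegral_ofReal_ne_top_iff_integrable (by fun_prop)
      (.of_forall fun x ↦ by positivity)).1 htail
  refine (hmin_int.add (htail_int.integrable_indicator hmeas)).mono' (by fun_prop)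
    (.of_forall fun x ↦ ?_)
  rw [Real.norm_of_nonneg (sq_nonneg x), Pi.add_apply]
  by_cases hx : 1 ≤ |x|
  · rw [indicator_of_mem (by exact hx), ← sq_abs]
    exact (pow_le_pow_right₀ hx hn).trans (le_add_of_nonneg_left (by positivity))
  · rw [indicator_of_notMem (by exact hx), add_zero, min_eq_right]
    exact (sq_le_one_iff_abs_le_one x).2 (not_le.1 hx).le

lemma tendsto_of_forall_tendsto_charFun {ι E : Type*} [NormedAddCommGroup E]
    [InnerProductSpace ℝ E] [FiniteDimensional ℝ E] [MeasurableSpace E] [BorelSpace E]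
    {l : Filter ι} [l.IsCountablyGenerated] {P : ι → ProbabilityMeasure E}
    {Q : ProbabilityMeasure E}
    (h : ∀ t, Tendsto (fun i ↦ charFun (P i : Measure E) t) l (𝓝 (charFun (Q : Measure E) t))) :
    Tendsto P l (𝓝 Q) :=
  tendsto_of_seq_tendsto fun _ hs ↦
    ProbabilityMeasure.tendsto_of_tendsto_charFun fun t ↦ (h t).comp hs

section Kappa

variable (μ c : ℝ) {K : Measure ℝ}

lemma tendsto_inv_sq_mul_integral_exp_sub_one_sub (hK : Integrable (fun x : ℝ ↦ x ^ 2) K) {z : ℂ}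
    (hz : z.re = 0) :
    Tendsto (fun lam : ℝ ↦ ((lam : ℂ) ^ 2)⁻¹ * ∫ x : ℝ, (exp (lam * z * x) - 1 - lam * z * x) ∂K)
      (𝓝[≠] 0) (𝓝 (((∫ x : ℝ, x ^ 2 ∂K : ℝ) : ℂ) / 2 * z ^ 2)) := by
  have hval : ((∫ x : ℝ, x ^ 2 ∂K : ℝ) : ℂ) / 2 * z ^ 2 = ∫ x : ℝ, (z * x) ^ 2 / 2 ∂K := by
    rw [← integral_complex_ofReal, ← integral_div, ← integral_mul_const]
    congr 1 with x
    push_cast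
    ring
  have hofReal : Tendsto ((↑) : ℝ → ℂ) (𝓝[≠] 0) (𝓝[≠] 0) :=
    (continuous_ofReal.tendsto' 0 0 ofReal_zero).inf
      (tendsto_principal_principal.2 fun _ ↦ ofReal_ne_zero.2)
  simp_rw [hval, ← integral_const_mul]
  refine tendsto_integral_filter_of_dominated_convergence (fun x ↦ 3 * ‖z‖ ^ 2 * x ^ 2)
    (.of_forall fun lam ↦ by fun_prop) ?_ (hK.const_mul _) (.of_forall fun x ↦ ?_)
  · filter_upwards [self_mem_nhdsWithin] with lam (hlam : lam ≠ 0)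
    refine .of_forall fun x ↦ ?_
    have hre : ((lam : ℂ) * z * x).re ≤ 0 := by simp [hz]
    calc ‖((lam : ℂ) ^ 2)⁻¹ * (exp (lam * z * x) - 1 - lam * z * x)‖
        ≤ (lam ^ 2)⁻¹ * (3 * ‖(lam : ℂ) * z * x‖ ^ 2) := by
          rw [norm_mul, norm_inv, norm_pow, norm_real, Real.norm_eq_abs, sq_abs]
          gcongr
          exact norm_exp_sub_one_sub_id_le_of_re_nonpos hre
      _ = 3 * ‖z‖ ^ 2 * x ^ 2 := by
          simp only [norm_mul, norm_real, Real.norm_eq_abs, mul_pow, sq_abs]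
          field_simp
  · simpa only [Function.comp_def, mul_assoc] using
      (tendsto_inv_sq_mul_exp_mul_sub_one_sub (z * x)).comp hofReal

lemma continuousAt_kappa_zero (hK : Integrable (fun x : ℝ ↦ x ^ 2) K) {z : ℂ} (hz : z.re = 0) :
    ContinuousAt (fun lam ↦ kappa μ c K lam z) 0 := by
  rw [continuousAt_iff_punctured_nhds]
  have hzero : kappa μ c K 0 z =
      μ * z + c / 2 * z ^ 2 + ((∫ x : ℝ, x ^ 2 ∂K : ℝ) : ℂ) / 2 * z ^ 2 := by
    rw [kappa, if_pos rfl]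
    push_cast
    ring
  rw [hzero]
  refine ((tendsto_inv_sq_mul_integral_exp_sub_one_sub hK hz).const_add _).congr' ?_
  filter_upwards [self_mem_nhdsWithin] with lam (hlam : lam ≠ 0)
  rw [kappa, if_neg hlam]

lemma charFun_gaussianReal_eq_exp_kappa_zero (hσ : 0 ≤ c + ∫ x : ℝ, x ^ 2 ∂K) (t : ℝ) :
    charFun (gaussianReal μ (c + ∫ x : ℝ, x ^ 2 ∂K).toNNReal) t = exp (kappa μ c K 0 (t * I)) := by
  rw [charFun_gaussianReal, Real.coe_toNNReal _ hσ, kappa, if_pos rfl, mul_pow, I_sq]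
  ring_nf

theorem interpolating_family_converges_weakly_to_gaussian_general
    (hK : Integrable (fun x : ℝ ↦ x ^ 2) K) (hσ : 0 ≤ c + ∫ x : ℝ, x ^ 2 ∂K)
    {ι : Type*} {l : Filter ι} [l.IsCountablyGenerated] {lam : ι → ℝ} (hlam : Tendsto lam l (𝓝 0))
    {ν : ι → ProbabilityMeasure ℝ}
    (hν : ∀ᶠ i in l, ∀ t : ℝ, charFun (ν i : Measure ℝ) t = exp (kappa μ c K (lam i) (t * I))) :
    Tendsto ν l (𝓝 ⟨gaussianReal μ (c + ∫ x : ℝ, x ^ 2 ∂K).toNNReal, inferInstance⟩) := by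
  refine tendsto_of_forall_tendsto_charFun fun t ↦ ?_
  have hkappa : Tendsto (fun i ↦ kappa μ c K (lam i) (t * I)) l (𝓝 (kappa μ c K 0 (t * I))) :=
    (continuousAt_kappa_zero μ c hK (by simp)).tendsto.comp hlam
  rw [ProbabilityMeasure.coe_mk, charFun_gaussianReal_eq_exp_kappa_zero μ c hσ t]
  exact hkappa.cexp.congr' (hν.mono fun i hi ↦ (hi t).symm)

end Kappa

/-- weak convergence, as `λ → 0`, of the marginals of the interpolating
family to the Gaussian law with mean `μ` and variance `σ²` (Lemma `X0`). -/
theorem interpolating_family_converges_weakly_to_gaussian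
    (μ c : ℝ) (hc : 0 ≤ c) (K : MeasureTheory.Measure ℝ)
    (hK0 : K {0} = 0)
    (hKmin : ∫⁻ x : ℝ, ENNReal.ofReal (min 1 (x ^ 2)) ∂K ≠ ⊤)
    (R : ℝ) (hR : R ≠ 0) (a b : ℝ)
    (h0 : (0 : ℝ) ∈ Set.Ioo a b) (h2 : (2 : ℝ) ∈ Set.Ioo a b)
    (h2R : 2 * R ∈ Set.Ioo a b)
    (hK5 : ∫⁻ x in {x : ℝ | 1 ≤ |x|}, ENNReal.ofReal (|x| ^ 5) ∂K ≠ ⊤)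
    (hKexp : ∀ s ∈ Set.Ioo a b,
      ∫⁻ x in {x : ℝ | 1 ≤ |x|}, ENNReal.ofReal (Real.exp (s * x)) ∂K ≠ ⊤)
    (σ2 : ℝ) (hσ2 : σ2 = c + ∫ x : ℝ, x ^ 2 ∂K) (hσ2pos : 0 < σ2)
    (ν : ℝ → ProbabilityMeasure ℝ)
    (hν : ∀ lam ∈ Set.Ioc (0 : ℝ) 1, ∀ u : ℝ,
      ∫ x : ℝ, Complex.exp ((u : ℂ) * (x : ℂ) * Complex.I) ∂(ν lam : Measure ℝ) =
        Complex.exp (kappa μ c K lam ((u : ℂ) * Complex.I))) :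
    Filter.Tendsto ν (𝓝[Set.Ioc (0 : ℝ) 1] 0)
      (𝓝 (⟨gaussianReal μ (Real.toNNReal σ2), inferInstance⟩ : ProbabilityMeasure ℝ)) := by
  subst hσ2
  exact interpolating_family_converges_weakly_to_gaussian_general μ c
    (integrable_sq_of_lintegral_min_of_lintegral_abs_pow (by norm_num : 2 ≤ 5) hKmin hK5) hσ2pos.le
    (tendsto_id.mono_left nhdsWithin_le_nhds)
    (eventually_mem_nhdsWithin.mono fun lam hlam t ↦ charFun_apply_real t ▸ hν lam hlam t)
end
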